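/- arXiv:2106.03726 — 2 statements merged into one kernel-verified Lean document; each statement's English description precedes it below -/
import Mathlib

section
/- Let d ≥ 3 and let q_1, …, q_d be pairwise coprime positive integers. Assume the Γ-periodic potentials V, Y : ℤ^d → ℝ are Fermi isospectral and that Y = ⊕_{j=1}^d Y_j is completely separable (i.e., (1,1,…,1) separable, with each Y_j a function of the single variable n_j). Then V = ⊕_{j=1}^d V_j is completely separable, and for each j = 1,…,d there exists a constant C_j ∈ ℝ such that V_j + C_j and Y_j are Floquet isospectral as q_jℤ-periodic potentials on ℤ. -/
open scoped BigOperators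
open Complex

noncomputable section

/-- The fundamental domain `W` for `Γ = q₁ℤ ⊕ ⋯ ⊕ q_dℤ`, as a type. -/
abbrev Cell (d : ℕ) (q : Fin d → ℕ) := (j : Fin d) → Fin (q j)

/-- `V : ℤ^d → ℝ` is `Γ`-periodic for `Γ = q₁ℤ ⊕ ⋯ ⊕ q_dℤ`. -/
def IsPeriodicPotential (d : ℕ) (q : Fin d → ℕ) (V : (Fin d → ℤ) → ℝ) : Prop :=
  ∀ n γ : Fin d → ℤ, (∀ j, (q j : ℤ) ∣ γ j) → V (n + γ) = V n

/-- The discrete Fourier transform `V̂(l)`, defined for all `l ∈ ℤ^d`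
(it is automatically `Γ`-periodic in `l`). -/
def dft (d : ℕ) (q : Fin d → ℕ) (V : (Fin d → ℤ) → ℝ) (l : Fin d → ℤ) : ℂ :=
  (1 / ∏ j, (q j : ℂ)) *
    ∑ n : Cell d q, (V (fun j => ((n j : ℕ) : ℤ)) : ℂ) *
      Complex.exp (-(2 * Real.pi * Complex.I) * ∑ j, (l j : ℂ) * ((n j : ℕ) : ℂ) / (q j : ℂ))

/-- `ρ^j_m = e^{2πi m/q_j}`. -/
def rho (d : ℕ) (q : Fin d → ℕ) (j : Fin d) (m : ℤ) : ℂ :=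
  Complex.exp (2 * Real.pi * Complex.I * (m : ℂ) / (q j : ℂ))

/-- The Floquet matrix `M_V(z)` (the matrix `A + B_V` of Lemma 2.7). -/
def floquetMatrix (d : ℕ) (q : Fin d → ℕ) (V : (Fin d → ℤ) → ℝ) (z : Fin d → ℂ) :
    Matrix (Cell d q) (Cell d q) ℂ := fun n n' =>
  (if n = n' then ∑ j, (rho d q j (n j : ℕ) * z j + (rho d q j (n j : ℕ) * z j)⁻¹) else 0)
    + dft d q V (fun j => ((n j : ℕ) : ℤ) - ((n' j : ℕ) : ℤ))

/-- `P̃_V(z, λ) = det (M_V(z) − λ I)`. -/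
def floquetDet (d : ℕ) (q : Fin d → ℕ) (V : (Fin d → ℤ) → ℝ) (z : Fin d → ℂ) (lam : ℂ) : ℂ :=
  Matrix.det (floquetMatrix d q V z - lam • (1 : Matrix (Cell d q) (Cell d q) ℂ))

/-- `V` and `Y` are Fermi isospectral. -/
def FermiIsospectral (d : ℕ) (q : Fin d → ℕ) (V Y : (Fin d → ℤ) → ℝ) : Prop :=
  ∃ lam0 : ℂ,
    {z : Fin d → ℂ | (∀ j, z j ≠ 0) ∧ floquetDet d q V z lam0 = 0}
      = {z : Fin d → ℂ | (∀ j, z j ≠ 0) ∧ floquetDet d q Y z lam0 = 0}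

/-- `V` and `Y` are Floquet isospectral. -/
def FloquetIsospectral (d : ℕ) (q : Fin d → ℕ) (V Y : (Fin d → ℤ) → ℝ) : Prop :=
  ∀ z : Fin d → ℂ, (∀ j, z j ≠ 0) → ∀ lam : ℂ,
    floquetDet d q V z lam = floquetDet d q Y z lam

/-- The average `[V]` of `V` over one periodicity cell. -/
def potentialAvg (d : ℕ) (q : Fin d → ℕ) (V : (Fin d → ℤ) → ℝ) : ℝ :=
  (1 / ∏ j, (q j : ℝ)) * ∑ n : Cell d q, V (fun j => ((n j : ℕ) : ℤ))

/-- The embedding of the `j`-th block of coordinates into `Fin d`,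
given block sizes `D : Fin r → ℕ` with `∑ j, D j = d`. -/
def blockEmbed {r d : ℕ} (D : Fin r → ℕ) (hsum : ∑ j, D j = d) (j : Fin r) (i : Fin (D j)) :
    Fin d :=
  ⟨(∑ k ∈ Finset.univ.filter (fun k => k < j), D k) + i.1, by
    have hj : j ∉ Finset.univ.filter (fun k => k < j) := by simp
    have h2 : (∑ k ∈ Finset.univ.filter (fun k => k < j), D k) + D j ≤ ∑ k, D k := by
      calc (∑ k ∈ Finset.univ.filter (fun k => k < j), D k) + D j
          = ∑ k ∈ insert j (Finset.univ.filter (fun k => k < j)), D k := by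
            rw [Finset.sum_insert hj, add_comm]
        _ ≤ ∑ k, D k := Finset.sum_le_sum_of_subset (Finset.subset_univ _)
    have h3 := i.2
    omega⟩

/-- `V` is `(D 0, …, D (r-1))` separable. -/
def IsSeparablePotential {r : ℕ} (d : ℕ) (D : Fin r → ℕ) (hsum : ∑ j, D j = d)
    (V : (Fin d → ℤ) → ℝ) : Prop :=
  ∃ Vj : (j : Fin r) → (Fin (D j) → ℤ) → ℝ,
    ∀ n : Fin d → ℤ, V n = ∑ j, Vj j (fun i => n (blockEmbed D hsum j i))



namespace FermiAux

/-! ### Abstract perturbation argument -/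

open Topology Filter

/-- Bordered matrix. -/
def bord {ι : Type*} [DecidableEq ι] (o : ι) (B : Matrix ι ι ℂ) (e k p : ℂ) (h : ι → ℂ) :
    Matrix ι ι ℂ := fun n n' =>
  if n = o then (if n' = o then p else B o n')
  else (if n' = o then k * B n o else e * B n n' + if n = n' then h n else 0)

lemma bord_det {ι : Type*} [Fintype ι] [DecidableEq ι] (o : ι) (B : Matrix ι ι ℂ) (k p : ℂ)
    (h : ι → ℂ) (hh : ∀ n, n ≠ o → h n ≠ 0) :
    (bord o B 0 k p h).det
      = (∏ n : {n // ¬ n = o}, h n) * (p - k * ∑ n ∈ Finset.univ.erase o, B o n * B n o / h n) := by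
  classical
  rw [Matrix.det_toBlock _ (fun n => ¬ n = o)]
  have hD : Matrix.toBlock (bord o B 0 k p h) (fun n => ¬ n = o) (fun n => ¬ n = o)
      = Matrix.diagonal (fun n : {n // ¬ n = o} => h n) := by
    ext ⟨i, hi⟩ ⟨j, hj⟩
    simp [Matrix.toBlock_apply, bord, hi, hj, Matrix.diagonal_apply]
  rw [hD]
  have hu : IsUnit (fun n : {n // ¬ n = o} => h n) := by
    rw [Pi.isUnit_iff]
    intro n
    exact isUnit_iff_ne_zero.mpr (hh n n.2)
  let _ := hu.invertible
  let _ : Invertible (Matrix.diagonal (fun n : {n // ¬ n = o} => h n)) :=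
    Matrix.diagonalInvertible _
  rw [Matrix.det_fromBlocks₁₁, Matrix.det_diagonal]
  congr 1
  let _ : Unique {n // ¬ ¬ n = o} := ⟨⟨⟨o, by simp⟩⟩, fun x => Subtype.ext (not_not.mp x.2)⟩
  rw [Matrix.det_unique]
  have hinv : ⅟ (Matrix.diagonal (fun n : {n // ¬ n = o} => h n))
      = Matrix.diagonal (fun n : {n // ¬ n = o} => (h n)⁻¹) := by
    apply invOf_eq_right_inv
    rw [Matrix.diagonal_mul_diagonal]
    rw [← Matrix.diagonal_one]
    congr 1
    funext n
    exact mul_inv_cancel₀ (hh n n.2)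
  rw [hinv]
  have hd : ((default : {n // ¬ ¬ n = o}) : ι) = o := rfl
  rw [Matrix.sub_apply, Matrix.mul_apply]
  simp only [Matrix.toBlock_apply, Matrix.mul_diagonal, hd]
  have h1 : bord o B 0 k p h o o = p := by simp [bord]
  rw [h1]
  congr 1
  have e : Finset.univ.erase o = Finset.univ.filter (fun n => ¬ n = o) := by
    ext; simp
  have hsub := Finset.sum_subtype_of_mem (p := fun n => ¬ n = o)
    (f := fun n => k * (B o n * B n o / h n)) (s := Finset.univ.filter (fun n => ¬ n = o))
    (by intro x hx; simpa using hx)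
  rw [Finset.mul_sum, e, ← hsub]
  have : (Finset.univ.filter (fun n => ¬ n = o)).subtype (fun n => ¬ n = o) = Finset.univ := by
    ext ⟨x, hx⟩; simp [hx]
  rw [this]
  apply Finset.sum_congr rfl
  rintro ⟨n, hn⟩ _
  have := hh n hn
  simp only [bord, hn, if_true, if_false]
  field_simp

lemma bord_zero_iff {ι : Type*} [Fintype ι] [DecidableEq ι] (o : ι) (B : Matrix ι ι ℂ)
    (e c : ℂ) (he : e ≠ 0) (hc : c ≠ 0) (D : ι → ℂ) :
    (bord o B e (e * c) ((D o + B o o) * c) (fun n => e * D n)).det = 0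
      ↔ (Matrix.diagonal D + B).det = 0 := by
  have : bord o B e (e * c) ((D o + B o o) * c) (fun n => e * D n)
      = Matrix.diagonal (fun n => if n = o then 1 else e) * (Matrix.diagonal D + B)
        * Matrix.diagonal (fun n => if n = o then c else 1) := by
    ext i j
    rw [Matrix.mul_diagonal, Matrix.diagonal_mul]
    by_cases hi : i = o
    · subst hi
      by_cases hj : j = i
      · subst hj; simp [bord]
      · simp [bord, hj, Matrix.diagonal_apply, Ne.symm hj]
    · by_cases hj : j = o
      · subst hj
        simp [bord, hi, Matrix.diagonal_apply]; ring
      · by_cases hij : i = j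
        · subst hij; simp [bord, hi]; ring
        · simp [bord, hi, hj, hij, Matrix.diagonal_apply]
  rw [this, Matrix.det_mul, Matrix.det_mul, Matrix.det_diagonal, Matrix.det_diagonal]
  have h1 : (∏ i, if i = o then (1:ℂ) else e) ≠ 0 := by
    rw [Finset.prod_ne_zero_iff]; intro i _; split_ifs <;> simp [he]
  have h2 : (∏ i, if i = o then c else (1:ℂ)) ≠ 0 := by
    rw [Finset.prod_ne_zero_iff]; intro i _; split_ifs <;> simp [hc]
  rw [mul_eq_zero, mul_eq_zero]
  tauto

lemma root_lemma (K : ℂ × ℂ → ℂ) (s0 c : ℂ) (hc : c ≠ 0)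
    (hK : ContDiffAt ℂ 1 K (s0, 0)) (h0 : ∀ s, K (s, 0) = c * (s - s0)) :
    ∃ᶠ x in 𝓝 (s0, (0:ℂ)), K x = 0 ∧ x.2 ≠ 0 := by
  have hs := hK.hasStrictFDerivAt one_ne_zero
  set f' := fderiv ℂ K (s0, 0) with hf'
  have hc' : f' (1, 0) = c := by
    have h1 : HasDerivAt (fun s : ℂ => ((s, 0) : ℂ × ℂ)) (1, 0) s0 :=
      (hasDerivAt_id s0).prodMk (hasDerivAt_const s0 0)
    have h2 : HasDerivAt (fun s : ℂ => K (s, 0)) (f' (1, 0)) s0 :=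
      (hs.hasFDerivAt).comp_hasDerivAt s0 h1
    have h3 : HasDerivAt (fun s : ℂ => K (s, 0)) c s0 := by
      simp only [h0]
      simpa using ((hasDerivAt_id s0).sub_const s0).const_mul c
    exact h2.unique h3
  have hP := hs.prodMk (hasStrictFDerivAt_snd (𝕜 := ℂ) (p := (s0, (0:ℂ))))
  have hsurj : (f'.prod (ContinuousLinearMap.snd ℂ ℂ ℂ)).range = ⊤ := by
    rw [LinearMap.range_eq_top]
    rintro ⟨a, b⟩
    refine ⟨((a - f' (0, b)) / c, b), ?_⟩
    have : (((a - f' (0, b)) / c, b) : ℂ × ℂ) = ((a - f' (0, b)) / c) • ((1, 0) : ℂ × ℂ) + (0, b) := by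
      simp
    rw [this]
    ext
    · simp only [ContinuousLinearMap.coe_coe, ContinuousLinearMap.prod_apply, map_add, map_smul, hc']
      simp [hc]
    · simp
  have hmap := hP.map_nhds_eq_of_surj hsurj
  intro hcon
  have hcon' : ∀ᶠ y in Filter.map (fun x : ℂ × ℂ => (K x, x.2)) (𝓝 (s0, (0:ℂ))),
      ¬ (y.1 = 0 ∧ y.2 ≠ 0) := by
    rw [Filter.eventually_map]
    exact hcon
  rw [hmap] at hcon'
  have h00 : K (s0, 0) = 0 := by rw [h0]; simp
  simp only [h00] at hcon'
  have hcont : Tendsto (fun e : ℂ => ((0:ℂ), e)) (𝓝[≠] 0) (𝓝 (0, 0)) := by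
    have : Continuous (fun e : ℂ => ((0:ℂ), e)) := by fun_prop
    exact (this.tendsto 0).mono_left nhdsWithin_le_nhds
  have h5 := hcont.eventually hcon'
  have h6 : ∀ᶠ e : ℂ in 𝓝[≠] 0, False := by
    filter_upwards [h5, self_mem_nhdsWithin] with e he1 he2
    exact he1 ⟨rfl, he2⟩
  exact (h6.exists).elim (fun _ h => h)

lemma contDiffAt_det {ι : Type*} [Fintype ι] [DecidableEq ι] (A : ℂ × ℂ → Matrix ι ι ℂ)
    (x : ℂ × ℂ) (h : ∀ i j, ContDiffAt ℂ 1 (fun y => A y i j) x) :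
    ContDiffAt ℂ 1 (fun y => (A y).det) x := by
  simp only [Matrix.det_apply']
  apply ContDiffAt.sum
  intro σ _
  apply ContDiffAt.mul contDiffAt_const
  apply contDiffAt_prod
  intro i _
  exact h _ _

lemma contDiffAt_bord {ι : Type*} [Fintype ι] [DecidableEq ι] (o : ι) (B : Matrix ι ι ℂ)
    (e k p : ℂ × ℂ → ℂ) (H : ι → ℂ × ℂ → ℂ) (x : ℂ × ℂ)
    (he : ContDiffAt ℂ 1 e x) (hk : ContDiffAt ℂ 1 k x) (hp : ContDiffAt ℂ 1 p x)
    (hH : ∀ n, n ≠ o → ContDiffAt ℂ 1 (H n) x) :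
    ContDiffAt ℂ 1 (fun y => (bord o B (e y) (k y) (p y) (fun n => H n y)).det) x := by
  apply contDiffAt_det
  intro i j
  unfold bord
  by_cases hi : i = o
  · by_cases hj : j = o
    · simpa [hi, hj] using hp
    · simpa [hi, hj] using contDiffAt_const
  · by_cases hj : j = o
    · simpa [hi, hj] using hk.mul contDiffAt_const
    · by_cases hij : i = j
      · simp only [hi, hj, hij, if_true, if_false]
        exact (he.mul contDiffAt_const).add (hH j hj)
      · simpa only [hi, hj, hij, if_true, if_false, add_zero] using he.mul contDiffAt_const

lemma frequently_zero {K : ℂ × ℂ → ℂ} {x : ℂ × ℂ} (hK : ContinuousAt K x)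
    (h : ∃ᶠ y in 𝓝 x, K y = 0) : K x = 0 := by
  by_contra hne
  exact h (hK.eventually_ne hne)

lemma abstract_perturb {ι : Type*} [Fintype ι] [DecidableEq ι] (o : ι) (BV BY : Matrix ι ι ℂ)
    (h : ι → ℂ) (hh : ∀ n, n ≠ o → h n ≠ 0) (H : ι → ℂ × ℂ → ℂ) (g : ℂ × ℂ → ℂ) (g0 : ℂ)
    (hH : ∀ n, n ≠ o → ∀ s, ContDiffAt ℂ 1 (H n) (s, 0))
    (hH0 : ∀ n s, n ≠ o → H n (s, 0) = h n)
    (hg : ∀ s, ContDiffAt ℂ 1 g (s, 0)) (hg0 : ∀ s, g (s, 0) = g0)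
    (D : ℂ × ℂ → ι → ℂ)
    (hDo : ∀ x : ℂ × ℂ, x.2 ≠ 0 → D x o = - BV o o + x.2 * (x.1 + g x))
    (hDn : ∀ (x : ℂ × ℂ) n, x.2 ≠ 0 → n ≠ o → x.2 * D x n = H n x)
    (hyp : ∀ s : ℂ, ∀ᶠ x in 𝓝 (s, (0:ℂ)), x.2 ≠ 0 → (Matrix.diagonal (D x) + BV).det = 0 →
      (Matrix.diagonal (D x) + BY).det = 0) :
    BY o o = BV o o ∧ ∑ n ∈ Finset.univ.erase o, BV o n * BV n o / h n
      = ∑ n ∈ Finset.univ.erase o, BY o n * BY n o / h n := by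
  have hprod : (∏ n : {n // ¬ n = o}, h n) ≠ 0 := by
    rw [Finset.prod_ne_zero_iff]; intro n _; exact hh n n.2
  have bordcongr : ∀ (B : Matrix ι ι ℂ) (e k p : ℂ) (h1 h2 : ι → ℂ), (∀ n, n ≠ o → h1 n = h2 n) →
      bord o B e k p h1 = bord o B e k p h2 := by
    intro B e k p h1 h2 h12
    ext i j
    unfold bord
    by_cases hi : i = o
    · simp [hi]
    · simp [hi, h12 i hi]
  set S := ∑ n ∈ Finset.univ.erase o, BV o n * BV n o / h n with hS
  set s0 := S - g0 with hs0
  let K : ℂ × ℂ → ℂ := fun x => (bord o BV x.2 1 (x.1 + g x) (fun n => H n x)).det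
  have hK : ContDiffAt ℂ 1 K (s0, 0) :=
    contDiffAt_bord o BV _ _ _ H (s0, 0) contDiffAt_snd contDiffAt_const
      (contDiffAt_fst.add (hg s0)) (fun n hn => hH n hn s0)
  have hK0 : ∀ s, K (s, 0) = (∏ n : {n // ¬ n = o}, h n) * (s - s0) := by
    intro s
    simp only [K]
    rw [bordcongr BV 0 1 _ _ h (fun n hn => hH0 n s hn), bord_det o BV 1 _ h hh, hg0]
    simp only [← hS, hs0]
    ring
  have hfreq := root_lemma K s0 _ hprod hK hK0
  have hfreq2 := (hfreq.and_eventually (hyp s0)).mono (q := fun x => x.2 ≠ 0 ∧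
      (Matrix.diagonal (D x) + BY).det = 0) (by
    rintro x ⟨⟨hx0, hx2⟩, hx3⟩
    refine ⟨hx2, hx3 hx2 ?_⟩
    rw [← bord_zero_iff o BV x.2 x.2⁻¹ hx2 (inv_ne_zero hx2), mul_inv_cancel₀ hx2, hDo x hx2]
    have : (-BV o o + x.2 * (x.1 + g x) + BV o o) * x.2⁻¹ = x.1 + g x := by
      field_simp; ring
    rw [this, bordcongr BV _ _ _ _ (fun n => H n x) (fun n hn => hDn x n hx2 hn)]
    exact hx0)
  have hbb : BY o o = BV o o := by
    let K1 : ℂ × ℂ → ℂ := fun x => (bord o BY x.2 x.2 (BY o o - BV o o + x.2 * (x.1 + g x))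
      (fun n => H n x)).det
    have hK1 : ContDiffAt ℂ 1 K1 (s0, 0) :=
      contDiffAt_bord o BY _ _ _ H (s0, 0) contDiffAt_snd contDiffAt_snd
        (contDiffAt_const.add (contDiffAt_snd.mul (contDiffAt_fst.add (hg s0))))
        (fun n hn => hH n hn s0)
    have := frequently_zero hK1.continuousAt (hfreq2.mono (by
      rintro x ⟨hx2, hx0⟩
      rw [← bord_zero_iff o BY x.2 1 hx2 one_ne_zero, mul_one, mul_one, hDo x hx2,
        bordcongr BY _ _ _ _ (fun n => H n x) (fun n hn => hDn x n hx2 hn)] at hx0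
      simp only [K1]
      convert hx0 using 3
      ring))
    simp only [K1] at this
    rw [bordcongr BY 0 0 _ _ h (fun n hn => hH0 n s0 hn), bord_det o BY 0 _ h hh] at this
    have h2 := (mul_eq_zero.mp this).resolve_left hprod
    simp at h2
    exact sub_eq_zero.mp h2
  refine ⟨hbb, ?_⟩
  let K2 : ℂ × ℂ → ℂ := fun x => (bord o BY x.2 1 (x.1 + g x) (fun n => H n x)).det
  have hK2 : ContDiffAt ℂ 1 K2 (s0, 0) :=
    contDiffAt_bord o BY _ _ _ H (s0, 0) contDiffAt_snd contDiffAt_const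
      (contDiffAt_fst.add (hg s0)) (fun n hn => hH n hn s0)
  have := frequently_zero hK2.continuousAt (hfreq2.mono (by
    rintro x ⟨hx2, hx0⟩
    rw [← bord_zero_iff o BY x.2 x.2⁻¹ hx2 (inv_ne_zero hx2), mul_inv_cancel₀ hx2, hDo x hx2,
        bordcongr BY _ _ _ _ (fun n => H n x) (fun n hn => hDn x n hx2 hn)] at hx0
    have h3 : (-BV o o + x.2 * (x.1 + g x) + BY o o) * x.2⁻¹ = x.1 + g x := by
      rw [hbb]; field_simp; ring
    rw [h3] at hx0
    exact hx0))
  simp only [K2] at this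
  rw [bordcongr BY 0 1 _ _ h (fun n hn => hH0 n s0 hn), bord_det o BY 1 _ h hh, hg0] at this
  have h2 := (mul_eq_zero.mp this).resolve_left hprod
  have h4 : s0 + g0 = S := by rw [hs0]; ring
  rw [h4, one_mul] at h2
  exact sub_eq_zero.mp h2

end FermiAux

namespace FermiAux

open Topology Filter

/-- Index zero of the cell. -/
def cz {d : ℕ} {q : Fin d → ℕ} (hq : ∀ j, 0 < q j) : Cell d q := fun j => ⟨0, hq j⟩

/-- the phase `ρ^j_{n_j}` -/
def ph {d : ℕ} {q : Fin d → ℕ} (n : Cell d q) (j : Fin d) : ℂ := rho d q j (n j : ℕ)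

/-- potential part of the Floquet matrix -/
def Bm (d : ℕ) (q : Fin d → ℕ) (V : (Fin d → ℤ) → ℝ) : Matrix (Cell d q) (Cell d q) ℂ :=
  fun n n' => dft d q V (fun j => ((n j : ℕ) : ℤ) - ((n' j : ℕ) : ℤ))

lemma ph_ne {d : ℕ} {q : Fin d → ℕ} (n : Cell d q) (j : Fin d) : ph n j ≠ 0 := Complex.exp_ne_zero _

lemma ph_cz {d : ℕ} {q : Fin d → ℕ} (hq : ∀ j, 0 < q j) (j : Fin d) : ph (cz hq) j = 1 := by
  simp [ph, cz, rho]

lemma floquet_eq (d : ℕ) (q : Fin d → ℕ) (V : (Fin d → ℤ) → ℝ) (z : Fin d → ℂ) (lam : ℂ) :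
    floquetMatrix d q V z - lam • (1 : Matrix (Cell d q) (Cell d q) ℂ)
      = Matrix.diagonal (fun n => ∑ j, (ph n j * z j + (ph n j * z j)⁻¹) - lam) + Bm d q V := by
  ext n n'
  by_cases h : n = n'
  · subst h; simp [floquetMatrix, Bm, ph]; ring
  · simp [floquetMatrix, Bm, ph, h]

lemma Bm_diag (d : ℕ) (q : Fin d → ℕ) (V : (Fin d → ℤ) → ℝ) (n m : Cell d q) :
    Bm d q V n n = Bm d q V m m := by
  simp [Bm]

lemma partA (d : ℕ) (j0 : Fin d) (q : Fin d → ℕ) (hq : ∀ j, 0 < q j)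
    (V Y : (Fin d → ℤ) → ℝ) (lam0 : ℂ)
    (hF : ∀ z : Fin d → ℂ, (∀ j, z j ≠ 0) → floquetDet d q V z lam0 = 0 →
      floquetDet d q Y z lam0 = 0)
    (z0 : Fin d → ℂ) (hz0 : ∀ j, z0 j ≠ 0) (hsum : ∑ j, z0 j = 0)
    (hh : ∀ n : Cell d q, n ≠ cz hq → ∑ j, ph n j * z0 j ≠ 0) :
    ∑ n ∈ Finset.univ.erase (cz hq), Bm d q V (cz hq) n * Bm d q V n (cz hq) / (∑ j, ph n j * z0 j)
    = ∑ n ∈ Finset.univ.erase (cz hq),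
        Bm d q Y (cz hq) n * Bm d q Y n (cz hq) / (∑ j, ph n j * z0 j) := by
  set o : Cell d q := cz hq with ho
  set w0 := lam0 - Bm d q V o o with hw0
  let y : Fin d → ℂ × ℂ → ℂ := fun j x => z0 j + (if j = j0 then 1 else 0) * (x.2 * (w0 + x.2 * x.1))
  have hy0 : ∀ j s, y j (s, 0) = z0 j := by intro j s; simp [y]
  have hyC : ∀ j s, ContDiffAt ℂ 1 (y j) (s, 0) := by
    intro j s
    simp only [y]
    fun_prop
  have hysum : ∀ x, ∑ j, y j x = x.2 * (w0 + x.2 * x.1) := by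
    intro x
    simp only [y]
    rw [Finset.sum_add_distrib, hsum, ← Finset.sum_mul]
    simp
  refine (abstract_perturb o (Bm d q V) (Bm d q Y) (fun n => ∑ j, ph n j * z0 j) hh
    (fun n x => ∑ j, (ph n j * y j x + x.2 ^ 2 * (ph n j * y j x)⁻¹) - x.2 * lam0)
    (fun x => ∑ j, (y j x)⁻¹) (∑ j, (z0 j)⁻¹) ?_ ?_ ?_ ?_
    (fun x n => ∑ j, (ph n j * (y j x / x.2) + (ph n j * (y j x / x.2))⁻¹) - lam0) ?_ ?_ ?_).2
  · intro n _ s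
    apply ContDiffAt.sub
    · apply ContDiffAt.sum
      intro j _
      apply ContDiffAt.add
      · exact contDiffAt_const.mul (hyC j s)
      · apply ContDiffAt.mul (by fun_prop)
        apply ContDiffAt.inv (contDiffAt_const.mul (hyC j s))
        rw [hy0]
        exact mul_ne_zero (ph_ne _ _) (hz0 j)
    · fun_prop
  · intro n s _
    simp [hy0]
  · intro s
    apply ContDiffAt.sum
    intro j _
    apply ContDiffAt.inv (hyC j s)
    rw [hy0]
    exact hz0 j
  · intro s
    simp [hy0]
  · intro x hx
    have h1 : ∀ j, ph o j = 1 := fun j => ph_cz hq j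
    simp only [h1, one_mul]
    rw [Finset.sum_add_distrib, ← Finset.sum_div, hysum]
    have : ∑ j, (y j x / x.2)⁻¹ = x.2 * ∑ j, (y j x)⁻¹ := by
      rw [Finset.mul_sum]
      apply Finset.sum_congr rfl
      intro j _
      rw [inv_div, div_eq_mul_inv]
    rw [this, mul_div_cancel_left₀ _ hx, hw0]
    ring
  · intro x n hx _
    simp only [mul_sub, Finset.mul_sum]
    congr 1
    apply Finset.sum_congr rfl
    intro j _
    rw [mul_add]
    congr 1
    · field_simp
    · rw [mul_inv, mul_inv, inv_div]
      field_simp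
  · intro s
    have hne : ∀ᶠ x in 𝓝 (s, (0:ℂ)), ∀ j, y j x ≠ 0 := by
      rw [Filter.eventually_all]
      intro j
      apply (hyC j s).continuousAt.eventually_ne
      rw [hy0]; exact hz0 j
    filter_upwards [hne] with x hx hx2 hV
    have := hF (fun j => y j x / x.2) (fun j => div_ne_zero (hx j) hx2)
    rw [floquetDet, floquetDet, floquet_eq, floquet_eq] at this
    exact this hV

lemma root_coprime {x : ℂ} {a b : ℕ} (h : Nat.Coprime a b) (ha : x ^ a = 1) (hb : x ^ b = 1) :
    x = 1 := by
  have h1 := orderOf_dvd_of_pow_eq_one ha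
  have h2 := orderOf_dvd_of_pow_eq_one hb
  have := Nat.dvd_gcd h1 h2
  rw [h] at this
  exact orderOf_eq_one_iff.mp (Nat.dvd_one.mp this)

lemma ph_pow {d : ℕ} {q : Fin d → ℕ} (hq : ∀ j, 0 < q j) (n : Cell d q) (j : Fin d) :
    ph n j ^ q j = 1 := by
  have : (q j : ℂ) ≠ 0 := by exact_mod_cast (hq j).ne'
  rw [ph, rho, ← Complex.exp_nat_mul, Complex.exp_eq_one_iff]
  exact ⟨(n j : ℕ), by push_cast; field_simp⟩

lemma ph_eq_pow {d : ℕ} {q : Fin d → ℕ} (n : Cell d q) (j : Fin d) :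
    ph n j = Complex.exp (2 * Real.pi * Complex.I / (q j : ℕ)) ^ (n j : ℕ) := by
  rw [ph, rho, ← Complex.exp_nat_mul]
  congr 1; push_cast; ring

lemma ph_inj {d : ℕ} {q : Fin d → ℕ} (hq : ∀ j, 0 < q j) (n m : Cell d q) (j : Fin d)
    (h : ph n j = ph m j) : n j = m j := by
  rw [ph_eq_pow, ph_eq_pow] at h
  exact Fin.ext ((Complex.isPrimitiveRoot_exp (q j) (hq j).ne').pow_inj (n j).2 (m j).2 h)

lemma ph_conj {d : ℕ} {q : Fin d → ℕ} (hq : ∀ j, 0 < q j) (n : Cell d q) (j : Fin d) :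
    ph n j * (starRingEnd ℂ) (ph n j) = 1 := by
  have h : ‖ph n j‖ = 1 := Complex.norm_eq_one_of_pow_eq_one (ph_pow hq n j) (hq j).ne'
  rw [Complex.mul_conj, Complex.normSq_eq_norm_sq, h]; simp

/-- Three points of the unit circle mapped to the unit circle by an affine map. -/
lemma circle_aux (A B C α β : ℂ) (hAB : A ≠ B) (hAC : A ≠ C) (hBC : B ≠ C)
    (hA : A * (starRingEnd ℂ) A = 1) (hB : B * (starRingEnd ℂ) B = 1)
    (hC : C * (starRingEnd ℂ) C = 1)
    (hA' : (α + β * A) * (starRingEnd ℂ) (α + β * A) = 1)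
    (hB' : (α + β * B) * (starRingEnd ℂ) (α + β * B) = 1)
    (hC' : (α + β * C) * (starRingEnd ℂ) (α + β * C) = 1) : α = 0 ∨ β = 0 := by
  simp only [map_add, map_mul] at hA' hB' hC'
  set a := (starRingEnd ℂ) α
  set b := (starRingEnd ℂ) β
  set k := α * a + β * b - 1
  have qd : ∀ X Xc : ℂ, X * Xc = 1 → (α + β * X) * (a + b * Xc) = 1 →
      β * a * X ^ 2 + k * X + α * b = 0 := by
    intro X Xc h1 h2
    simp only [k]
    linear_combination X * h2 - (α * b + β * b * X) * h1
  have eA := qd A _ hA hA'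
  have eB := qd B _ hB hB'
  have eC := qd C _ hC hC'
  have e1 : β * a * (A + B) + k = 0 := by
    have : (A - B) * (β * a * (A + B) + k) = 0 := by linear_combination eA - eB
    exact (mul_eq_zero.mp this).resolve_left (sub_ne_zero.mpr hAB)
  have e2 : β * a * (A + C) + k = 0 := by
    have : (A - C) * (β * a * (A + C) + k) = 0 := by linear_combination eA - eC
    exact (mul_eq_zero.mp this).resolve_left (sub_ne_zero.mpr hAC)
  have e3 : β * a = 0 := by
    have : (B - C) * (β * a) = 0 := by linear_combination e1 - e2
    exact (mul_eq_zero.mp this).resolve_left (sub_ne_zero.mpr hBC)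
  rcases mul_eq_zero.mp e3 with h | h
  · right; exact h
  · left; simpa [a] using h

end FermiAux

namespace FermiAux

open Topology Filter

/-- linear form `h_n` -/
def hl {d : ℕ} {q : Fin d → ℕ} (n : Cell d q) : Module.Dual ℂ (Fin d → ℂ) :=
  ∑ j, ph n j • LinearMap.proj j

lemma hl_apply {d : ℕ} {q : Fin d → ℕ} (n : Cell d q) (z : Fin d → ℂ) :
    hl n z = ∑ j, ph n j * z j := by
  simp [hl]

/-- the test vector supported at three indices -/
def tv {d : ℕ} (c : Fin d → ℂ) (i j m : Fin d) : Fin d → ℂ :=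
  Pi.single i (c j - c m) + Pi.single j (c m - c i) + Pi.single m (c i - c j)

lemma sum_tv {d : ℕ} (c e : Fin d → ℂ) (i j m : Fin d) :
    ∑ k, e k * tv c i j m k = e i * (c j - c m) + e j * (c m - c i) + e m * (c i - c j) := by
  simp [tv, mul_add, Finset.sum_add_distrib, Pi.single_apply]

lemma exists_third {d : ℕ} (hd : 3 ≤ d) (i j : Fin d) : ∃ k : Fin d, k ≠ i ∧ k ≠ j := by
  by_contra hcon
  push Not at hcon
  have : (Finset.univ : Finset (Fin d)) ⊆ {i, j} := by
    intro k _
    by_cases h : k = i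
    · simp [h]
    · simp [hcon k h]
  have h1 := Finset.card_le_card this
  have h2 := Finset.card_le_two (a := i) (b := j)
  simp at h1
  omega

lemma ph_ne_ph {d : ℕ} {q : Fin d → ℕ} (hq : ∀ j, 0 < q j)
    (hco : ∀ i j : Fin d, i ≠ j → Nat.Coprime (q i) (q j)) (l : Cell d q) (i m : Fin d)
    (him : m ≠ i) (hi : l i ≠ cz hq i) : ph l i ≠ ph l m := by
  intro h
  have h1 : ph l i = 1 :=
    root_coprime (hco i m him.symm) (ph_pow hq l i) (by rw [h]; exact ph_pow hq l m)
  apply hi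
  apply ph_inj hq
  rw [h1, ph_cz]

lemma exists_nonvanish {d : ℕ} (hd : 3 ≤ d) {q : Fin d → ℕ} (hq : ∀ j, 0 < q j)
    (hco : ∀ i j : Fin d, i ≠ j → Nat.Coprime (q i) (q j)) (l : Cell d q) (i j : Fin d)
    (hij : i ≠ j) (hi : l i ≠ cz hq i) (hj : l j ≠ cz hq j) (n : Cell d q)
    (hn0 : n ≠ cz hq) (hnl : n ≠ l) :
    ∃ m, m ≠ i ∧ m ≠ j ∧ hl n (tv (ph l) i j m) ≠ 0 := by
  by_contra hcon
  push Not at hcon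
  have hAB := ph_ne_ph hq hco l i j hij.symm hi
  have hAB' : ph l i - ph l j ≠ 0 := sub_ne_zero.mpr hAB
  set β := (ph n i - ph n j) / (ph l i - ph l j) with hβ
  set α := ph n i - β * ph l i with hα
  have hβ' : β * (ph l i - ph l j) = ph n i - ph n j := by rw [hβ]; field_simp
  have haff : ∀ m, ph n m = α + β * ph l m := by
    intro m
    by_cases hmi : m = i
    · subst hmi; rw [hα]; ring
    by_cases hmj : m = j
    · subst hmj; rw [hα]; linear_combination hβ'
    have := hcon m hmi hmj
    rw [hl_apply, sum_tv] at this
    apply mul_right_cancel₀ hAB'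
    rw [hα]
    linear_combination this - (ph l m - ph l i) * hβ'
  obtain ⟨k, hki, hkj⟩ := exists_third hd i j
  have hc := circle_aux (ph l i) (ph l j) (ph l k) α β hAB
    (ph_ne_ph hq hco l i k hki hi) (ph_ne_ph hq hco l j k hkj hj)
    (ph_conj hq l i) (ph_conj hq l j) (ph_conj hq l k)
    (by rw [← haff]; exact ph_conj hq n i) (by rw [← haff]; exact ph_conj hq n j)
    (by rw [← haff]; exact ph_conj hq n k)
  rcases hc with h | h
  · -- rotation
    have h1 : ∀ m, β ^ q m = 1 := by
      intro m
      have h2 := haff m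
      rw [h, zero_add] at h2
      have h3 := ph_pow hq n m
      rw [h2, mul_pow, ph_pow hq l m, mul_one] at h3
      exact h3
    have h4 : β = 1 := root_coprime (hco i j hij) (h1 i) (h1 j)
    apply hnl
    funext m
    apply ph_inj hq
    rw [haff, h, h4]; ring
  · have h1 : ∀ m, ph n m = α := by intro m; rw [haff, h]; ring
    have h4 : α = 1 := root_coprime (hco i j hij) (by rw [← h1 i]; exact ph_pow hq n i)
      (by rw [← h1 j]; exact ph_pow hq n j)
    apply hn0
    funext m
    apply ph_inj hq
    rw [h1, h4, ph_cz]

lemma partB {d : ℕ} (hd : 3 ≤ d) {q : Fin d → ℕ} (hq : ∀ j, 0 < q j)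
    (hco : ∀ i j : Fin d, i ≠ j → Nat.Coprime (q i) (q j)) (a : Cell d q → ℂ)
    (ha : ∀ z0 : Fin d → ℂ, (∀ j, z0 j ≠ 0) → ∑ j, z0 j = 0 →
      (∀ n : Cell d q, n ≠ cz hq → hl n z0 ≠ 0) →
      ∑ n ∈ Finset.univ.erase (cz hq), a n / hl n z0 = 0)
    (l : Cell d q) (i j : Fin d)
    (hij : i ≠ j) (hi : l i ≠ cz hq i) (hj : l j ≠ cz hq j) : a l = 0 := by
  have hl0 : l ≠ cz hq := by rintro rfl; exact hi rfl
  -- the subspace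
  let U : Submodule ℂ (Fin d → ℂ) := LinearMap.ker (hl (cz hq)) ⊓ LinearMap.ker (hl l)
  have htvU : ∀ m, tv (ph l) i j m ∈ U := by
    intro m
    simp only [U, Submodule.mem_inf, LinearMap.mem_ker, hl_apply, sum_tv, ph_cz]
    constructor <;> ring
  let Idx := Fin d ⊕ {n : Cell d q // n ≠ cz hq ∧ n ≠ l}
  let f : Idx → Module.Dual ℂ (Fin d → ℂ) :=
    Sum.elim (fun m => LinearMap.proj m) (fun n => hl n.1)
  have hAB := ph_ne_ph hq hco l i j hij.symm hi
  obtain ⟨p, hpU, hp⟩ := Module.Dual.exists_forall_mem_ne_zero_of_forall_exists U f (by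
    rintro (m | ⟨n, hn0, hnl⟩)
    · obtain ⟨k, hki, hkj⟩ := exists_third hd i j
      by_cases hmi : m = i
      · subst hmi
        refine ⟨_, htvU k, ?_⟩
        have := sub_ne_zero.mpr (ph_ne_ph hq hco l j k hkj hj)
        simpa [f, tv, hij, hki.symm, Pi.single_apply] using this
      by_cases hmj : m = j
      · subst hmj
        refine ⟨_, htvU k, ?_⟩
        have := sub_ne_zero.mpr (ph_ne_ph hq hco l i k hki hi).symm
        simpa [f, tv, hmi, hkj.symm, Pi.single_apply] using this
      · refine ⟨_, htvU m, ?_⟩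
        have := sub_ne_zero.mpr hAB
        simpa [f, tv, hmi, hmj, Pi.single_apply] using this
    · obtain ⟨m, _, _, hm⟩ := exists_nonvanish hd hq hco l i j hij hi hj n hn0 hnl
      exact ⟨_, htvU m, hm⟩)
  have hp1 : ∀ m, p m ≠ 0 := fun m => hp (Sum.inl m)
  have hp2 : ∀ n : Cell d q, n ≠ cz hq → n ≠ l → hl n p ≠ 0 := fun n h1 h2 => hp (Sum.inr ⟨n, h1, h2⟩)
  have hpc : hl (cz hq) p = 0 := hpU.1
  have hpl : hl l p = 0 := hpU.2
  -- transversal direction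
  let r : Fin d → ℂ := Pi.single i 1 - Pi.single j 1
  have hrc : hl (cz hq) r = 0 := by
    rw [hl_apply]; simp [r, ph_cz]
  have hrl : hl l r ≠ 0 := by
    rw [hl_apply]
    simpa [r, mul_sub, Pi.single_apply] using sub_ne_zero.mpr hAB
  have key : ∀ᶠ t : ℂ in 𝓝[≠] 0,
      a l / hl l r = - (t * ∑ n ∈ (Finset.univ.erase (cz hq)).erase l, a n / hl n (p + t • r)) := by
    have e1 : ∀ᶠ t : ℂ in 𝓝 0, ∀ m, (p + t • r) m ≠ 0 := by
      rw [Filter.eventually_all]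
      intro m
      have hc : Continuous (fun t : ℂ => (p + t • r) m) := by
        simp only [Pi.add_apply, Pi.smul_apply, smul_eq_mul]; fun_prop
      apply hc.continuousAt.eventually_ne
      simpa using hp1 m
    have e2 : ∀ᶠ t : ℂ in 𝓝 0, ∀ n : Cell d q, n ≠ cz hq → n ≠ l → hl n (p + t • r) ≠ 0 := by
      rw [Filter.eventually_all]
      intro n
      by_cases h1 : n = cz hq
      · simp [h1]
      by_cases h2 : n = l
      · simp [h2]
      have hc : Continuous (fun t : ℂ => hl n (p + t • r)) := by
        simp only [map_add, map_smul, smul_eq_mul]; fun_prop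
      have := hc.continuousAt.eventually_ne (x := 0) (y := 0) (by simpa using hp2 n h1 h2)
      filter_upwards [this] with t ht _ _ using ht
    filter_upwards [nhdsWithin_le_nhds e1, nhdsWithin_le_nhds e2, self_mem_nhdsWithin] with t h1 h2 h3
    have h3' : t ≠ 0 := h3
    have hlt : hl l (p + t • r) = t * hl l r := by simp [hpl]
    have hs := ha (p + t • r) h1 (by
      have : hl (cz hq) (p + t • r) = 0 := by simp [hpc, hrc]
      rw [hl_apply] at this
      simpa only [ph_cz, one_mul] using this) (by
      intro n hn
      by_cases hnl : n = l
      · subst hnl; rw [hlt]; exact mul_ne_zero h3' hrl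
      · exact h2 n hn hnl)
    rw [← Finset.add_sum_erase _ _ (Finset.mem_erase.mpr ⟨hl0, Finset.mem_univ l⟩), hlt] at hs
    have : a l / hl l r = t * (a l / (t * hl l r)) := by field_simp
    rw [this]
    linear_combination t * hs
  have hlim : Tendsto (fun t : ℂ => - (t * ∑ n ∈ (Finset.univ.erase (cz hq)).erase l,
      a n / hl n (p + t • r))) (𝓝[≠] 0) (𝓝 0) := by
    have hc : ContinuousAt (fun t : ℂ => - (t * ∑ n ∈ (Finset.univ.erase (cz hq)).erase l,
      a n / hl n (p + t • r))) 0 := by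
      apply ContinuousAt.neg
      apply ContinuousAt.mul continuousAt_id
      apply tendsto_finsetSum
      intro n hn
      simp only [Finset.mem_erase] at hn
      have hc : Continuous (fun t : ℂ => hl n (p + t • r)) := by
        simp only [map_add, map_smul, smul_eq_mul]; fun_prop
      exact continuousAt_const.div hc.continuousAt (by simpa using hp2 n hn.2.1 hn.1)
    have := hc.tendsto.mono_left (nhdsWithin_le_nhds (s := {0}ᶜ))
    simpa using this
  have hconst : Tendsto (fun _ : ℂ => a l / hl l r) (𝓝[≠] 0) (𝓝 0) := hlim.congr' (by
    filter_upwards [key] with t ht using ht.symm)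
  have := tendsto_nhds_unique hconst tendsto_const_nhds
  have h2 := (div_eq_zero_iff.mp this.symm).resolve_right hrl
  exact h2

end FermiAux

namespace FermiAux

/-- the character `exp(2πi m / q)` -/
def ex (q : ℕ) (m : ℤ) : ℂ := Complex.exp (2 * Real.pi * Complex.I * (m : ℂ) / (q : ℂ))

lemma ex_ne (q : ℕ) (m : ℤ) : ex q m ≠ 0 := Complex.exp_ne_zero _

lemma ex_add (q : ℕ) (m n : ℤ) : ex q (m + n) = ex q m * ex q n := by
  rw [ex, ex, ex, ← Complex.exp_add]; congr 1; push_cast; ring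

lemma ex_zero (q : ℕ) : ex q 0 = 1 := by simp [ex]

lemma ex_mul_nat (q : ℕ) (l : ℤ) (m : ℕ) : ex q (l * m) = ex q l ^ m := by
  rw [ex, ex, ← Complex.exp_nat_mul]; congr 1; push_cast; ring

lemma ex_eq_one {q : ℕ} (hq : 0 < q) (m : ℤ) : ex q m = 1 ↔ (q : ℤ) ∣ m := by
  have hq' : (q : ℂ) ≠ 0 := by exact_mod_cast hq.ne'
  rw [ex, Complex.exp_eq_one_iff]
  have hpi : (2 * Real.pi * Complex.I : ℂ) ≠ 0 := by
    simp [Real.pi_ne_zero]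
  constructor
  · rintro ⟨k, hk⟩
    refine ⟨k, ?_⟩
    have : (m : ℂ) = (q : ℂ) * k := by
      field_simp at hk
      linear_combination hk
    exact_mod_cast this
  · rintro ⟨k, rfl⟩
    exact ⟨k, by push_cast; field_simp⟩

lemma ex_pow {q : ℕ} (hq : 0 < q) (m : ℤ) : ex q m ^ q = 1 := by
  rw [← ex_mul_nat, ex_eq_one hq]; exact dvd_mul_left _ _

lemma ex_sum {q : ℕ} (hq : 0 < q) (l : ℤ) :
    ∑ m : Fin q, ex q (l * (m : ℕ)) = if (q : ℤ) ∣ l then (q : ℂ) else 0 := by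
  simp only [ex_mul_nat]
  rw [Fin.sum_univ_eq_sum_range (fun m => ex q l ^ m) q]
  split_ifs with h
  · rw [(ex_eq_one hq l).mpr h]; simp
  · have h1 : ex q l ≠ 1 := fun h' => h ((ex_eq_one hq l).mp h')
    rw [geom_sum_eq h1, ex_pow hq]; simp

/-- one-dimensional DFT -/
def d1 (q : ℕ) (v : ℤ → ℝ) (l : ℤ) : ℂ :=
  (1 / (q : ℂ)) * ∑ m : Fin q, (v ((m : ℕ) : ℤ) : ℂ) * ex q (-(l * (m : ℕ)))

lemma exp_eq_prod (d : ℕ) (q : Fin d → ℕ) (l : Fin d → ℤ) (n : Cell d q) :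
    Complex.exp (-(2 * Real.pi * Complex.I) * ∑ j, (l j : ℂ) * ((n j : ℕ) : ℂ) / (q j : ℂ))
      = ∏ j, ex (q j) (-(l j * (n j : ℕ))) := by
  simp only [ex]
  rw [← Complex.exp_sum, Finset.mul_sum]
  congr 1
  apply Finset.sum_congr rfl
  intro j _
  push_cast; ring

lemma sum_cell_prod (d : ℕ) (q : Fin d → ℕ) (φ : (j : Fin d) → Fin (q j) → ℂ) :
    ∑ n : Cell d q, ∏ j, φ j (n j) = ∏ j, ∑ m, φ j m := by
  rw [Finset.prod_univ_sum]; simp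

lemma dft_sep (d : ℕ) (q : Fin d → ℕ) (hq : ∀ j, 0 < q j) (V : (Fin d → ℤ) → ℝ)
    (Vj : Fin d → ℤ → ℝ)
    (hV : ∀ n : Fin d → ℤ, V n = ∑ j, Vj j (n j)) (l : Fin d → ℤ) :
    dft d q V l = ∑ j, d1 (q j) (Vj j) (l j) *
      ∏ i ∈ Finset.univ.erase j, (if (q i : ℤ) ∣ l i then (1 : ℂ) else 0) := by
  unfold dft
  simp only [exp_eq_prod, hV]
  push_cast
  simp only [Finset.sum_mul]
  rw [Finset.sum_comm, Finset.mul_sum]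
  apply Finset.sum_congr rfl
  intro j _
  have h1 : ∀ n : Cell d q, (Vj j ((n j : ℕ) : ℤ) : ℂ) * ∏ i, ex (q i) (-(l i * (n i : ℕ)))
      = ∏ i, ((if i = j then (Vj i ((n i : ℕ) : ℤ) : ℂ) else 1) * ex (q i) (-(l i * (n i : ℕ)))) := by
    intro n
    rw [Finset.prod_mul_distrib]
    congr 1
    simp
  simp only [h1]
  rw [sum_cell_prod d q (fun i m => (if i = j then (Vj i ((m : ℕ) : ℤ) : ℂ) else 1)
    * ex (q i) (-(l i * (m : ℕ)))), one_div, ← Finset.prod_inv_distrib, ← Finset.prod_mul_distrib,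
    ← Finset.mul_prod_erase _ _ (Finset.mem_univ j)]
  congr 1
  · simp [d1]
  · apply Finset.prod_congr rfl
    intro i hi
    have hij : i ≠ j := (Finset.mem_erase.mp hi).1
    have hqi : (q i : ℂ) ≠ 0 := by exact_mod_cast (hq i).ne'
    simp only [hij, if_false, one_mul]
    have := ex_sum (hq i) (-(l i))
    simp only [neg_mul, dvd_neg] at this
    rw [this]
    split_ifs <;> simp [hqi]

lemma dft_inv (d : ℕ) (q : Fin d → ℕ) (hq : ∀ j, 0 < q j) (V : (Fin d → ℤ) → ℝ) (n : Cell d q) :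
    ∑ l : Cell d q, dft d q V (fun j => ((l j : ℕ) : ℤ)) * ∏ j, ex (q j) ((n j : ℕ) * (l j : ℕ))
      = (V (fun j => ((n j : ℕ) : ℤ)) : ℂ) := by
  unfold dft
  simp only [exp_eq_prod]
  simp only [mul_assoc, Finset.sum_mul]
  rw [← Finset.mul_sum, Finset.sum_comm]
  have hQ : (∏ j, (q j : ℂ)) ≠ 0 := by
    rw [Finset.prod_ne_zero_iff]; intro j _; exact_mod_cast (hq j).ne'
  have h1 : ∀ m : Cell d q, ∑ l : Cell d q, (V (fun j => ((m j : ℕ) : ℤ)) : ℂ) *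
      ((∏ j, ex (q j) (-(((l j : ℕ) : ℤ) * (m j : ℕ)))) * ∏ j, ex (q j) ((n j : ℕ) * (l j : ℕ)))
      = if m = n then (V (fun j => ((n j : ℕ) : ℤ)) : ℂ) * ∏ j, (q j : ℂ) else 0 := by
    intro m
    rw [← Finset.mul_sum]
    simp only [← Finset.prod_mul_distrib, ← ex_add]
    rw [sum_cell_prod d q (fun j l => ex (q j) (-(((l : ℕ) : ℤ) * (m j : ℕ)) + (n j : ℕ) * (l : ℕ)))]
    have h2 : ∀ j, ∑ l : Fin (q j), ex (q j) (-(((l : ℕ) : ℤ) * (m j : ℕ)) + (n j : ℕ) * (l : ℕ))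
        = if m j = n j then (q j : ℂ) else 0 := by
      intro j
      have h3 := ex_sum (hq j) (((n j : ℕ) : ℤ) - ((m j : ℕ) : ℤ))
      have h4 : ((q j : ℤ) ∣ ((n j : ℕ) : ℤ) - ((m j : ℕ) : ℤ)) ↔ m j = n j := by
        rw [← Int.modEq_iff_dvd, Int.natCast_modEq_iff, Fin.ext_iff]
        constructor
        · intro h; exact Nat.ModEq.eq_of_lt_of_lt h (m j).2 (n j).2
        · intro h; rw [h]
      simp only [h4] at h3
      rw [← h3]
      apply Finset.sum_congr rfl
      intro l _
      congr 1; ring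
    simp only [h2]
    split_ifs with h
    · subst h; simp
    · obtain ⟨j, hj⟩ := Function.ne_iff.mp h
      rw [Finset.prod_eq_zero (Finset.mem_univ j) (by simp [hj]), mul_zero]
  simp only [h1]
  simp
  field_simp

lemma sep_of_dft (d : ℕ) (q : Fin d → ℕ) (hq : ∀ j, 0 < q j) (V : (Fin d → ℤ) → ℝ)
    (hVper : IsPeriodicPotential d q V)
    (h : ∀ l : Cell d q, (¬ ∃ j, ∀ i, i ≠ j → (l i : ℕ) = 0) →
      dft d q V (fun j => ((l j : ℕ) : ℤ)) = 0) :
    ∃ Vj : Fin d → ℤ → ℝ, ∀ n : Fin d → ℤ, V n = ∑ j, Vj j (n j) := by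
  classical
  have h1 : ∀ l : Cell d q, ∃ F : (j : Fin d) → ℕ → ℂ, ∀ n : Cell d q,
      dft d q V (fun j => ((l j : ℕ) : ℤ)) * ∏ j, ex (q j) ((n j : ℕ) * (l j : ℕ))
        = ∑ j, F j (n j : ℕ) := by
    intro l
    by_cases hl : ∃ j, ∀ i, i ≠ j → (l i : ℕ) = 0
    · obtain ⟨j, hj⟩ := hl
      refine ⟨fun i m => if i = j then dft d q V (fun j => ((l j : ℕ) : ℤ)) *
        ex (q i) ((m : ℤ) * (l i : ℕ)) else 0, fun n => ?_⟩
      rw [Finset.sum_ite_eq' Finset.univ j]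
      simp only [Finset.mem_univ, if_true]
      rw [Finset.prod_eq_single j]
      · intro i _ hij
        rw [hj i hij]; simp [ex_zero]
      · simp
    · exact ⟨fun _ _ => 0, fun n => by rw [h l hl]; simp⟩
  choose F hF using h1
  refine ⟨fun j m => (∑ l, F l j (m % (q j : ℤ)).toNat).re, fun n => ?_⟩
  let c : Cell d q := fun j => ⟨(n j % (q j : ℤ)).toNat, by
    have h0 : (0 : ℤ) < q j := by exact_mod_cast hq j
    have := Int.emod_lt_of_pos (n j) h0
    have := Int.emod_nonneg (n j) h0.ne'
    omega⟩
  have hc : ∀ j, ((c j : ℕ) : ℤ) = n j % (q j : ℤ) := by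
    intro j
    have h0 : (0 : ℤ) < q j := by exact_mod_cast hq j
    exact Int.toNat_of_nonneg (Int.emod_nonneg (n j) h0.ne')
  have h2 : V n = V (fun j => ((c j : ℕ) : ℤ)) := by
    rw [← hVper (fun j => ((c j : ℕ) : ℤ)) (fun j => n j - ((c j : ℕ) : ℤ))]
    · congr 1; funext j; simp
    · intro j
      rw [hc]
      exact Int.dvd_self_sub_emod
  have h3 := dft_inv d q hq V c
  simp only [hF] at h3
  rw [Finset.sum_comm] at h3
  rw [h2, ← Complex.ofReal_re (V _), ← h3, Complex.re_sum]

end FermiAux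

namespace FermiAux

lemma dft_neg_conj (d : ℕ) (q : Fin d → ℕ) (V : (Fin d → ℤ) → ℝ) (l : Fin d → ℤ) :
    dft d q V (fun j => 0 - l j) = (starRingEnd ℂ) (dft d q V l) := by
  unfold dft
  simp only [map_mul, map_sum, map_prod, map_div₀, map_one, Complex.conj_ofReal, map_natCast,
    ← Complex.exp_conj, map_neg, Complex.conj_I, map_ofNat, map_intCast]
  congr 1
  apply Finset.sum_congr rfl
  intro n _
  congr 2
  rw [Finset.mul_sum, Finset.mul_sum]
  apply Finset.sum_congr rfl
  intro j _
  push_cast; ring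

lemma V_sep (d : ℕ) (hd : 3 ≤ d)
    (q : Fin d → ℕ) (hq : ∀ j, 0 < q j)
    (hco : ∀ i j : Fin d, i ≠ j → Nat.Coprime (q i) (q j))
    (V Y : (Fin d → ℤ) → ℝ) (hVper : IsPeriodicPotential d q V) (lam0 : ℂ)
    (hF : ∀ z : Fin d → ℂ, (∀ j, z j ≠ 0) → floquetDet d q V z lam0 = 0 →
      floquetDet d q Y z lam0 = 0)
    (Yj : Fin d → ℤ → ℝ)
    (hYsep : ∀ n : Fin d → ℤ, Y n = ∑ j, Yj j (n j)) :
    ∃ Vj : Fin d → ℤ → ℝ, ∀ n : Fin d → ℤ, V n = ∑ j, Vj j (n j) := by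
  apply sep_of_dft d q hq V hVper
  intro l hl
  push Not at hl
  obtain ⟨i, _, hi⟩ := hl ⟨0, by omega⟩
  obtain ⟨j, hji, hj⟩ := hl i
  have hcz : ∀ k, (l k : ℕ) ≠ 0 → l k ≠ cz hq k := by
    intro k hk h
    apply hk
    rw [h]; rfl
  have hB := partB hd hq hco
    (fun n => Bm d q V (cz hq) n * Bm d q V n (cz hq) - Bm d q Y (cz hq) n * Bm d q Y n (cz hq))
    (by
      intro z0 h1 h2 h3
      simp only [hl_apply] at h3 ⊢
      have := partA d ⟨0, by omega⟩ q hq V Y lam0 hF z0 h1 h2 h3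
      simp only [sub_div, Finset.sum_sub_distrib]
      rw [this, sub_self]) l i j hji.symm (hcz i hi) (hcz j hj)
  have hY : Bm d q Y l (cz hq) = 0 := by
    simp only [Bm, cz]
    rw [dft_sep d q hq Y Yj hYsep]
    apply Finset.sum_eq_zero
    intro k _
    obtain ⟨m, hmk, hm⟩ := hl k
    rw [Finset.prod_eq_zero (Finset.mem_erase.mpr ⟨hmk, Finset.mem_univ m⟩), mul_zero]
    rw [if_neg]
    intro hdvd
    simp only [Nat.cast_zero, sub_zero] at hdvd
    have := Nat.le_of_dvd (Nat.pos_of_ne_zero hm) (Int.natCast_dvd_natCast.mp hdvd)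
    have := (l m).2
    omega
  simp only [hY, mul_zero, sub_zero] at hB
  have e1 : Bm d q V l (cz hq) = dft d q V (fun j => ((l j : ℕ) : ℤ)) := by
    simp [Bm, cz]
  have e2 : Bm d q V (cz hq) l = (starRingEnd ℂ) (dft d q V (fun j => ((l j : ℕ) : ℤ))) := by
    rw [← dft_neg_conj]
    simp [Bm, cz]
  rw [e1, e2] at hB
  rcases mul_eq_zero.mp hB with h | h
  · simpa using h
  · exact h

/-! ### One-dimensional structure -/

/-- one-dimensional Floquet matrix -/
def Nm (q : ℕ) (v : ℤ → ℝ) (z : ℂ) : Matrix (Fin q) (Fin q) ℂ := fun m m' =>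
  (if m = m' then ex q ((m : ℕ) : ℤ) * z + (ex q ((m : ℕ) : ℤ) * z)⁻¹ else 0)
    + d1 q v (((m : ℕ) : ℤ) - ((m' : ℕ) : ℤ))

lemma dft_one (q : ℕ) (v : ℤ → ℝ) (l : Fin 1 → ℤ) :
    dft 1 (fun _ => q) (fun m => v (m 0)) l = d1 q v (l 0) := by
  unfold dft d1
  simp only [exp_eq_prod]
  simp only [Finset.univ_unique, Finset.prod_singleton, Fin.default_eq_zero]
  congr 1
  exact Fintype.sum_equiv (Equiv.funUnique (Fin 1) (Fin q)) _ _ (fun n => rfl)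

lemma floquetDet_one (q : ℕ) (v : ℤ → ℝ) (z : Fin 1 → ℂ) (lam : ℂ) :
    floquetDet 1 (fun _ => q) (fun m => v (m 0)) z lam
      = (Nm q v (z 0) - lam • (1 : Matrix (Fin q) (Fin q) ℂ)).det := by
  unfold floquetDet
  rw [← Matrix.det_submatrix_equiv_self (Equiv.funUnique (Fin 1) (Fin q))]
  congr 1
  ext n n'
  have h : n = n' ↔ n 0 = n' 0 := by
    constructor
    · rintro rfl; rfl
    · intro h; funext i; rw [Subsingleton.elim i 0]; exact h
  simp only [floquetMatrix, dft_one, Nm, Matrix.sub_apply, Matrix.submatrix_apply, Matrix.smul_apply,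
    Matrix.one_apply, Equiv.funUnique_apply, Fin.default_eq_zero, Finset.univ_unique,
    Finset.sum_singleton, h]
  rfl

lemma ex_mod {q : ℕ} (hq : 0 < q) (a b : ℤ) (h : (q : ℤ) ∣ a - b) : ex q a = ex q b := by
  have : a = (a - b) + b := by ring
  rw [this, ex_add, (ex_eq_one hq _).mpr h, one_mul]

lemma d1_mod {q : ℕ} (hq : 0 < q) (v : ℤ → ℝ) (a b : ℤ) (h : (q : ℤ) ∣ a - b) :
    d1 q v a = d1 q v b := by
  unfold d1
  congr 1
  apply Finset.sum_congr rfl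
  intro m _
  congr 1
  apply ex_mod hq
  have : -(a * ((m : ℕ) : ℤ)) - -(b * ((m : ℕ) : ℤ)) = (a - b) * (-((m : ℕ) : ℤ)) := by ring
  rw [this]
  exact Dvd.dvd.mul_right h _

lemma D_invariant {q : ℕ} (hq : 0 < q) (v : ℤ → ℝ) (z lam : ℂ) :
    (Nm q v (ex q 1 * z) - lam • (1 : Matrix (Fin q) (Fin q) ℂ)).det
      = (Nm q v z - lam • (1 : Matrix (Fin q) (Fin q) ℂ)).det := by
  have : NeZero q := ⟨hq.ne'⟩
  rw [← Matrix.det_submatrix_equiv_self (Equiv.addRight (1 : Fin q)) (Nm q v z - _)]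
  congr 1
  have hadd : ∀ m : Fin q, (q : ℤ) ∣ (((m + 1 : Fin q) : ℕ) : ℤ) - (((m : ℕ) : ℤ) + 1) := by
    intro m
    rw [Fin.val_add]
    have h1 : (((m : ℕ) + ((1 : Fin q) : ℕ)) % q : ℕ) ≡ (m : ℕ) + 1 [MOD q] := by
      refine (Nat.mod_modEq _ _).trans ?_
      apply Nat.ModEq.add_left
      rw [Fin.val_one']
      exact Nat.mod_modEq _ _
    have h2 := (Nat.modEq_iff_dvd.mp h1.symm)
    push_cast at h2 ⊢
    exact h2
  ext m m'
  have e1 : ex q (((m + 1 : Fin q) : ℕ) : ℤ) = ex q ((m : ℕ) : ℤ) * ex q 1 := by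
    rw [← ex_add]; exact ex_mod hq _ _ (hadd m)
  have e2 : d1 q v ((((m + 1 : Fin q) : ℕ) : ℤ) - (((m' + 1 : Fin q) : ℕ) : ℤ))
      = d1 q v (((m : ℕ) : ℤ) - ((m' : ℕ) : ℤ)) := by
    apply d1_mod hq
    have h3 := dvd_sub (hadd m) (hadd m')
    have h4 : ∀ a b c e : ℤ, (q : ℤ) ∣ (a - (c + 1)) - (b - (e + 1)) →
        (q : ℤ) ∣ (a - b) - (c - e) := by
      intro a b c e h
      have h5 : (a - b) - (c - e) = (a - (c + 1)) - (b - (e + 1)) := by ring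
      rw [h5]; exact h
    exact h4 _ _ _ _ h3
  simp only [Nm, Matrix.sub_apply, Matrix.submatrix_apply, Matrix.smul_apply, Matrix.one_apply,
    Equiv.coe_addRight, add_left_inj, e1, e2, mul_assoc]

open Polynomial in
/-- polynomial version of the one-dimensional matrix -/
def Pm (q : ℕ) (v : ℤ → ℝ) (lam : ℂ) : Matrix (Fin q) (Fin q) ℂ[X] := fun m m' =>
  C (if m = m' then ex q ((m : ℕ) : ℤ) else 0) * X ^ 2
    + C (d1 q v (((m : ℕ) : ℤ) - ((m' : ℕ) : ℤ)) - lam * (if m = m' then 1 else 0)) * X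
    + C (if m = m' then (ex q ((m : ℕ) : ℤ))⁻¹ else 0)

open Polynomial in
lemma D_structure {q : ℕ} (hq : 0 < q) (v : ℤ → ℝ) (lam : ℂ) :
    ∃ F : ℂ, ∀ z : ℂ, z ≠ 0 →
      (Nm q v z - lam • (1 : Matrix (Fin q) (Fin q) ℂ)).det
        = (∏ m : Fin q, ex q ((m : ℕ) : ℤ)) * z ^ q
          + (∏ m : Fin q, (ex q ((m : ℕ) : ℤ))⁻¹) * (z ^ q)⁻¹ + F := by
  set p := (Pm q v lam).det with hp
  have heval : ∀ z : ℂ, z ≠ 0 → p.eval z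
      = z ^ q * (Nm q v z - lam • (1 : Matrix (Fin q) (Fin q) ℂ)).det := by
    intro z hz
    have h1 := Matrix.det_smul (Nm q v z - lam • (1 : Matrix (Fin q) (Fin q) ℂ)) z
    rw [Fintype.card_fin] at h1
    rw [← h1, hp, ← Polynomial.coe_evalRingHom, RingHom.map_det]
    congr 1
    ext m m'
    rw [RingHom.mapMatrix_apply, Matrix.map_apply]
    by_cases h : m = m'
    · subst h
      have := ex_ne q ((m : ℕ) : ℤ)
      simp [Pm, Nm]
      field_simp
      ring
    · simp [Pm, Nm, h]; ring
  have hdegentry : ∀ m m', (Pm q v lam m m').natDegree ≤ 2 := by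
    intro m m'
    exact natDegree_quadratic_le
  have hdegprod : ∀ σ : Equiv.Perm (Fin q), (∏ i, Pm q v lam (σ i) i).natDegree ≤ 2 * q := by
    intro σ
    refine (natDegree_prod_le _ _).trans ?_
    refine (Finset.sum_le_sum (fun i _ => hdegentry (σ i) i)).trans ?_
    simp [mul_comm]
  have hdeg : p.natDegree ≤ 2 * q := by
    rw [hp, Matrix.det_apply]
    apply natDegree_sum_le_of_forall_le
    intro σ _
    exact (natDegree_smul_le _ _).trans (hdegprod σ)
  have hcoeff0 : p.coeff 0 = ∏ m : Fin q, (ex q ((m : ℕ) : ℤ))⁻¹ := by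
    rw [coeff_zero_eq_eval_zero, hp, ← Polynomial.coe_evalRingHom, RingHom.map_det, ← Matrix.det_diagonal]
    congr 1
    ext m m'
    rw [RingHom.mapMatrix_apply, Matrix.map_apply]
    by_cases h : m = m'
    · subst h; simp [Pm]
    · simp [Pm, h]
  have hcoeff2 : p.coeff (2 * q) = ∏ m : Fin q, ex q ((m : ℕ) : ℤ) := by
    have h1 : ∀ σ : Equiv.Perm (Fin q), (∏ i, Pm q v lam (σ i) i).coeff (2 * q)
        = ∏ i, (Pm q v lam (σ i) i).coeff 2 := by
      intro σ
      have := coeff_prod_of_natDegree_le (s := Finset.univ) (fun i => Pm q v lam (σ i) i) 2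
        (fun i _ => hdegentry (σ i) i)
      rw [← this]
      simp [mul_comm]
    have h2 : ∀ m m', (Pm q v lam m m').coeff 2 = Matrix.diagonal (fun m : Fin q => ex q ((m : ℕ) : ℤ)) m m' := by
      intro m m'
      simp only [Pm, coeff_add, coeff_C_mul, coeff_X_pow, coeff_X, coeff_C, Matrix.diagonal_apply]
      simp
    rw [← Matrix.det_diagonal, hp, Matrix.det_apply, Matrix.det_apply, finsetSum_coeff]
    apply Finset.sum_congr rfl
    intro σ _
    rw [coeff_smul, h1]
    simp only [h2]
  have hinv : p.comp (C (ex q 1) * X) = p := by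
    apply Polynomial.eq_of_infinite_eval_eq
    apply Set.Infinite.mono (s := {0}ᶜ)
    · intro z hz
      have hz' : z ≠ 0 := hz
      simp only [Set.mem_ofPred_eq, eval_comp, eval_mul, eval_C, eval_X]
      rw [heval _ (mul_ne_zero (ex_ne _ _) hz'), heval z hz', D_invariant hq, mul_pow, ex_pow hq,
        one_mul]
    · exact (Set.finite_singleton 0).infinite_compl
  have hzero : ∀ k, ¬ q ∣ k → p.coeff k = 0 := by
    intro k hk
    have h1 : p.coeff k * ex q 1 ^ k = p.coeff k := by
      rw [← comp_C_mul_X_coeff, hinv]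
    have h2 : ex q 1 ^ k ≠ 1 := by
      rw [← ex_mul_nat, one_mul, Ne, ex_eq_one hq]
      intro h; exact hk (Int.natCast_dvd_natCast.mp h)
    have h3 : p.coeff k * (ex q 1 ^ k - 1) = 0 := by linear_combination h1
    exact (mul_eq_zero.mp h3).resolve_right (sub_ne_zero.mpr h2)
  have hpe : ∀ z, p.eval z = p.coeff 0 + p.coeff q * z ^ q + p.coeff (2 * q) * z ^ (2 * q) := by
    intro z
    rw [eval_eq_sum_range' (Nat.lt_succ_of_le hdeg)]
    have hsub : ({0, q, 2 * q} : Finset ℕ) ⊆ Finset.range (2 * q).succ := by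
      intro k hk
      simp at hk ⊢
      omega
    rw [← Finset.sum_subset hsub]
    · rw [Finset.sum_insert, Finset.sum_insert, Finset.sum_singleton]
      · ring
      · simp; omega
      · simp; omega
    · intro k hk hk2
      rw [hzero k, zero_mul]
      rintro ⟨c, rfl⟩
      apply hk2
      simp only [Finset.mem_range] at hk
      have : c ≤ 2 := by
        by_contra hc
        have : q * 3 ≤ q * c := Nat.mul_le_mul_left q (by omega)
        omega
      interval_cases c <;> simp [mul_comm]
  refine ⟨p.coeff q, fun z hz => ?_⟩
  have hzq : z ^ q ≠ 0 := pow_ne_zero _ hz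
  apply mul_left_cancel₀ hzq
  rw [← heval z hz, hpe, hcoeff0, hcoeff2]
  have : z ^ (2 * q) = z ^ q * z ^ q := by rw [two_mul, pow_add]
  rw [this]
  field_simp
  ring

end FermiAux

namespace FermiAux

section Kron

variable {ι : Type} [Fintype ι] [DecidableEq ι] {κ : ι → Type} [∀ i, Fintype (κ i)]
  [∀ i, DecidableEq (κ i)]

/-- the operator acting by `N` in the `j`-th variable -/
def Aop (j : ι) (N : Matrix (κ j) (κ j) ℂ) : Module.End ℂ ((∀ i, κ i) → ℂ) where
  toFun f := fun n => ∑ m, N (n j) m * f (Function.update n j m)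
  map_add' f g := by
    funext n
    simp [mul_add, Finset.sum_add_distrib]
  map_smul' c f := by
    funext n
    simp only [Pi.smul_apply, smul_eq_mul, RingHom.id_apply, Finset.mul_sum]
    apply Finset.sum_congr rfl
    intro m _
    ring

lemma Aop_apply (j : ι) (N : Matrix (κ j) (κ j) ℂ) (f : (∀ i, κ i) → ℂ) (n : ∀ i, κ i) :
    Aop j N f n = ∑ m, N (n j) m * f (Function.update n j m) := rfl

lemma Aop_comm (i j : ι) (hij : i ≠ j) (N : Matrix (κ i) (κ i) ℂ) (M : Matrix (κ j) (κ j) ℂ)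
    (f : (∀ i, κ i) → ℂ) : Aop i N (Aop j M f) = Aop j M (Aop i N f) := by
  funext n
  simp only [Aop_apply, Finset.mul_sum]
  rw [Finset.sum_comm]
  apply Finset.sum_congr rfl
  intro m _
  apply Finset.sum_congr rfl
  intro m' _
  rw [Function.update_of_ne hij.symm, Function.update_of_ne hij, Function.update_comm hij]
  ring

lemma common_eig {W : Type} [AddCommGroup W] [Module ℂ W] [FiniteDimensional ℂ W]
    (A : ι → Module.End ℂ W) (hA : ∀ i j f, A i (A j f) = A j (A i f)) (S : Finset ι) :
    ∀ E : Submodule ℂ W, E ≠ ⊥ → (∀ i, ∀ f ∈ E, A i f ∈ E) →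
      ∃ f ∈ E, f ≠ 0 ∧ ∀ i ∈ S, ∃ μ : ℂ, A i f = μ • f := by
  induction S using Finset.induction_on with
  | empty =>
    intro E hE _
    obtain ⟨f, hf, hf0⟩ := Submodule.exists_mem_ne_zero_of_ne_bot hE
    exact ⟨f, hf, hf0, by simp⟩
  | insert j S _ ih =>
    intro E hE hinv
    have : Nontrivial E := Submodule.nontrivial_iff_ne_bot.mpr hE
    obtain ⟨μ, hμ⟩ := Module.End.exists_eigenvalue ((A j).restrict (hinv j))
    obtain ⟨g, hg⟩ := hμ.exists_hasEigenvector
    have hg1 := hg.apply_eq_smul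
    have hg2 : A j (g : W) = μ • (g : W) := by
      have := congrArg Subtype.val hg1
      simpa using this
    have hg0 : (g : W) ≠ 0 := by
      intro h
      exact hg.2 (Subtype.ext h)
    obtain ⟨f, hf, hf0, hfS⟩ := ih (E ⊓ Module.End.eigenspace (A j) μ)
      (by
        intro hbot
        have : (g : W) ∈ E ⊓ Module.End.eigenspace (A j) μ :=
          ⟨g.2, Module.End.mem_eigenspace_iff.mpr hg2⟩
        rw [hbot] at this
        exact hg0 ((Submodule.mem_bot ℂ).mp this))
      (by
        rintro i f ⟨hf1, hf2⟩
        refine ⟨hinv i f hf1, Module.End.mem_eigenspace_iff.mpr ?_⟩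
        have := Module.End.mem_eigenspace_iff.mp hf2
        rw [hA, this, map_smul])
    refine ⟨f, hf.1, hf0, ?_⟩
    intro i hi
    rcases Finset.mem_insert.mp hi with rfl | hi
    · exact ⟨μ, Module.End.mem_eigenspace_iff.mp hf.2⟩
    · exact hfS i hi

/-- Kronecker sum matrix -/
def Ksum (N : ∀ j, Matrix (κ j) (κ j) ℂ) : Matrix (∀ i, κ i) (∀ i, κ i) ℂ := fun n n' =>
  ∑ j, N j (n j) (n' j) * ∏ i ∈ Finset.univ.erase j, (if n i = n' i then (1 : ℂ) else 0)

lemma Ksum_mulVec (N : ∀ j, Matrix (κ j) (κ j) ℂ) (f : (∀ i, κ i) → ℂ) :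
    (Ksum N).mulVec f = ∑ j, Aop j (N j) f := by
  funext n
  rw [Finset.sum_apply]
  simp only [Matrix.mulVec, dotProduct, Ksum, Finset.sum_mul, Aop_apply]
  rw [Finset.sum_comm]
  apply Finset.sum_congr rfl
  intro j _
  symm
  apply Fintype.sum_of_injective (fun m => Function.update n j m)
    (Function.update_injective n j)
  · intro n' hn'
    have : ∃ i, i ≠ j ∧ n i ≠ n' i := by
      by_contra hcon
      push Not at hcon
      apply hn'
      refine ⟨n' j, ?_⟩
      funext i
      by_cases h : i = j
      · subst h; simp
      · simp [h, hcon i h]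
    obtain ⟨i, hi, hne⟩ := this
    rw [Finset.prod_eq_zero (Finset.mem_erase.mpr ⟨hi, Finset.mem_univ i⟩)]
    · simp
    · simp [hne]
  · intro m
    rw [Finset.prod_eq_one]
    · simp
    · intro i hi
      simp [Finset.ne_of_mem_erase hi]

lemma det_zero_iff {α : Type} [Fintype α] [DecidableEq α] (M : Matrix α α ℂ) (lam : ℂ) :
    (M - lam • (1 : Matrix α α ℂ)).det = 0 ↔ ∃ f : α → ℂ, f ≠ 0 ∧ M.mulVec f = lam • f := by
  rw [← Matrix.exists_mulVec_eq_zero_iff]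
  apply exists_congr
  intro f
  apply and_congr_right
  intro _
  rw [Matrix.sub_mulVec, Matrix.smul_mulVec, Matrix.one_mulVec, sub_eq_zero]

lemma Ksum_of_parts (N : ∀ j, Matrix (κ j) (κ j) ℂ) (x : ι → ℂ)
    (h : ∀ j, (N j - x j • (1 : Matrix (κ j) (κ j) ℂ)).det = 0) :
    (Ksum N - (∑ j, x j) • (1 : Matrix (∀ i, κ i) (∀ i, κ i) ℂ)).det = 0 := by
  simp only [det_zero_iff] at h ⊢
  choose f hf0 hf using h
  refine ⟨fun n => ∏ i, f i (n i), ?_, ?_⟩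
  · have : ∀ j, ∃ m, f j m ≠ 0 := fun j => Function.ne_iff.mp (hf0 j)
    choose n hn using this
    intro h
    have := congrFun h n
    exact (Finset.prod_ne_zero_iff.mpr (fun i _ => hn i)) this
  · rw [Ksum_mulVec, Finset.sum_smul]
    apply Finset.sum_congr rfl
    intro j _
    funext n
    rw [Aop_apply]
    have h1 : ∀ m, ∏ i, f i (Function.update n j m i)
        = f j m * ∏ i ∈ Finset.univ.erase j, f i (n i) := by
      intro m
      rw [← Finset.mul_prod_erase _ _ (Finset.mem_univ j)]
      simp only [Function.update_self]
      congr 1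
      apply Finset.prod_congr rfl
      intro i hi
      rw [Function.update_of_ne (Finset.ne_of_mem_erase hi)]
    simp only [h1, Pi.smul_apply, smul_eq_mul]
    rw [← Finset.mul_prod_erase _ _ (Finset.mem_univ j), ← mul_assoc, ← smul_eq_mul (x j),
      ← Pi.smul_apply, ← hf j]
    simp only [Matrix.mulVec, dotProduct, Finset.sum_mul, mul_assoc]

lemma parts_of_Ksum (N : ∀ j, Matrix (κ j) (κ j) ℂ) (lam : ℂ)
    (h : (Ksum N - lam • (1 : Matrix (∀ i, κ i) (∀ i, κ i) ℂ)).det = 0) :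
    ∃ x : ι → ℂ, ∑ j, x j = lam ∧
      ∀ j, (N j - x j • (1 : Matrix (κ j) (κ j) ℂ)).det = 0 := by
  simp only [det_zero_iff] at h ⊢
  obtain ⟨g, hg0, hg⟩ := h
  rw [Ksum_mulVec] at hg
  have hcomm : ∀ i j f, Aop i (N i) (Aop j (N j) f) = Aop j (N j) (Aop i (N i) f) := by
    intro i j f
    by_cases hij : i = j
    · subst hij; rfl
    · exact Aop_comm i j hij _ _ f
  obtain ⟨f, hf, hf0, hfe⟩ := common_eig (fun j => Aop j (N j)) hcomm Finset.univ
    (Module.End.eigenspace (∑ j, Aop j (N j)) lam)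
    (by
      intro hbot
      have : g ∈ Module.End.eigenspace (∑ j, Aop j (N j)) lam := by
        rw [Module.End.mem_eigenspace_iff, LinearMap.sum_apply, hg]
      rw [hbot] at this
      exact hg0 ((Submodule.mem_bot ℂ).mp this))
    (by
      intro i f hf
      rw [Module.End.mem_eigenspace_iff, LinearMap.sum_apply] at hf ⊢
      rw [← map_smul, ← hf, map_sum]
      apply Finset.sum_congr rfl
      intro j _
      exact hcomm j i f)
  rw [Module.End.mem_eigenspace_iff, LinearMap.sum_apply] at hf
  have hfe' : ∀ i, ∃ μ : ℂ, Aop i (N i) f = μ • f := fun i => hfe i (Finset.mem_univ i)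
  choose x hx using hfe'
  refine ⟨x, ?_, ?_⟩
  · simp only [hx, ← Finset.sum_smul] at hf
    exact smul_left_injective ℂ hf0 hf
  · intro j
    obtain ⟨n, hn⟩ := Function.ne_iff.mp hf0
    refine ⟨fun m => f (Function.update n j m), ?_, ?_⟩
    · intro h
      apply hn
      have := congrFun h (n j)
      simpa using this
    · funext m
      have := congrFun (hx j) (Function.update n j m)
      rw [Aop_apply] at this
      simpa [Matrix.mulVec, dotProduct] using this

end Kron

lemma dvd_iff_fin {q : ℕ} (a b : Fin q) : (q : ℤ) ∣ ((a : ℕ) : ℤ) - ((b : ℕ) : ℤ) ↔ a = b := by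
  constructor
  · intro h
    have h1 : (b : ℕ) ≡ (a : ℕ) [MOD q] := Nat.modEq_iff_dvd.mpr h
    exact (Fin.ext (Nat.ModEq.eq_of_lt_of_lt h1 b.2 a.2)).symm
  · rintro rfl; simp

lemma floquet_Ksum (d : ℕ) (q : Fin d → ℕ) (hq : ∀ j, 0 < q j) (V : (Fin d → ℤ) → ℝ)
    (Vj : Fin d → ℤ → ℝ)
    (hV : ∀ n : Fin d → ℤ, V n = ∑ j, Vj j (n j)) (z : Fin d → ℂ) :
    floquetMatrix d q V z = Ksum (fun j => Nm (q j) (Vj j) (z j)) := by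
  ext n n'
  simp only [floquetMatrix, Ksum, Nm]
  rw [dft_sep d q hq V Vj hV]
  simp only [add_mul, Finset.sum_add_distrib, dvd_iff_fin]
  congr 1
  split_ifs with h
  · subst h
    simp [rho, ex, Finset.sum_add_distrib]
  · symm
    apply Finset.sum_eq_zero
    intro j _
    obtain ⟨i, hi⟩ := Function.ne_iff.mp h
    by_cases hij : i = j
    · subst hij; simp [hi]
    · rw [Finset.prod_eq_zero (Finset.mem_erase.mpr ⟨hij, Finset.mem_univ i⟩), mul_zero]
      simp [hi]

end FermiAux

namespace FermiAux

open Polynomial in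
lemma poly_bound (g : ℂ[X]) (n : ℕ) (hn : 1 ≤ n) (hg : g.Monic) (hdeg : g.natDegree = n)
    (hc : g.coeff (n - 1) = 0) :
    ∃ K : ℝ, 0 ≤ K ∧ ∀ (y : ℂ) (m : ℝ), 1 ≤ m → ‖y‖ ≤ m →
      ‖g.eval y - y ^ n‖ * m ^ 2 ≤ K * m ^ n := by
  refine ⟨∑ i ∈ Finset.range n, ‖g.coeff i‖, Finset.sum_nonneg (fun _ _ => norm_nonneg _), ?_⟩
  intro y m hm hy
  have h1 : g.eval y - y ^ n = ∑ i ∈ Finset.range n, g.coeff i * y ^ i := by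
    rw [eval_eq_sum_range, hdeg, Finset.sum_range_succ]
    have : g.coeff n = 1 := by rw [← hdeg]; exact hg
    rw [this]; ring
  rw [h1, Finset.sum_mul]
  have hm0 : (0 : ℝ) ≤ m := by linarith
  refine (mul_le_mul_of_nonneg_right (norm_sum_le _ _) (by positivity)).trans ?_
  rw [Finset.sum_mul]
  apply Finset.sum_le_sum
  intro i hi
  have hi' := Finset.mem_range.mp hi
  by_cases h : i = n - 1
  · subst h; rw [hc]; simp
  · rw [norm_mul, norm_pow, mul_assoc]
    apply mul_le_mul_of_nonneg_left _ (norm_nonneg _)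
    calc ‖y‖ ^ i * m ^ 2 ≤ m ^ i * m ^ 2 := by gcongr
      _ = m ^ (i + 2) := by rw [pow_add]
      _ ≤ m ^ n := pow_le_pow_right₀ hm (by omega)

lemma nth_root_near (n : ℕ) (hn : 1 ≤ n) :
    ∃ δ L : ℝ, 0 < δ ∧ 0 ≤ L ∧ ∀ u : ℂ, ‖u - 1‖ < δ →
      ∃ w : ℂ, w ^ n = u ∧ ‖w - 1‖ ≤ L * ‖u - 1‖ := by
  have hd : DifferentiableAt ℂ (fun u : ℂ => u ^ ((n : ℂ)⁻¹)) 1 := by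
    apply DifferentiableAt.cpow_const differentiableAt_id
    simp [Complex.one_mem_slitPlane]
  have hO := hd.hasDerivAt.differentiableAt.isBigO_sub
  obtain ⟨L, hL0, hL⟩ := hO.exists_nonneg
  rw [Asymptotics.isBigOWith_iff] at hL
  obtain ⟨δ, hδ, hδ'⟩ := Metric.eventually_nhds_iff.mp hL
  refine ⟨δ, L, hδ, hL0, ?_⟩
  intro u hu
  refine ⟨u ^ ((n : ℂ)⁻¹), Complex.cpow_nat_inv_pow u (by omega), ?_⟩
  have := hδ' (by rw [dist_eq_norm]; exact hu)
  simpa using this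

open Polynomial in
lemma asymp (f g : ℂ[X]) (n : ℕ) (hn : 1 ≤ n) (hf : f.Monic) (hfdeg : f.natDegree = n)
    (hfc : f.coeff (n - 1) = 0) (hg : g.Monic) (hgdeg : g.natDegree = n)
    (hgc : g.coeff (n - 1) = 0) (ε : ℝ) (hε : 0 < ε) :
    ∃ R : ℝ, ∀ T x : ℂ, R ≤ ‖T‖ → g.eval x = f.eval T →
      ∃ ω : ℂ, ω ^ n = 1 ∧ ‖x - ω * T‖ ≤ ε := by
  obtain ⟨K1, hK1, hb1⟩ := poly_bound f n hn hf hfdeg hfc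
  obtain ⟨K2, hK2, hb2⟩ := poly_bound g n hn hg hgdeg hgc
  obtain ⟨δ, L, hδ, hL, hroot⟩ := nth_root_near n hn
  set K := K1 + K2 with hK
  have hK0 : 0 ≤ K := by positivity
  set K' := K * 2 ^ n with hK'
  have hK'0 : 0 ≤ K' := by positivity
  set δ' := min δ 1 with hδ'
  have hδ'0 : 0 < δ' := lt_min hδ one_pos
  refine ⟨1 + 2 * K + K' / δ' + L * K' / ε, ?_⟩
  intro T x hT hx
  have p1 : 0 ≤ K' / δ' := by positivity
  have p2 : 0 ≤ L * K' / ε := by positivity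
  have hT1 : 1 ≤ ‖T‖ := by linarith
  have hTK : 2 * K < ‖T‖ ∨ 2 * K + 1 ≤ ‖T‖ := by right; linarith
  have hTne : T ≠ 0 := by
    intro h; rw [h, norm_zero] at hT1; linarith
  have hdiff : ∀ m : ℝ, 1 ≤ m → ‖x‖ ≤ m → ‖T‖ ≤ m → ‖x ^ n - T ^ n‖ * m ^ 2 ≤ K * m ^ n := by
    intro m hm h1 h2
    have e : x ^ n - T ^ n = (f.eval T - T ^ n) - (g.eval x - x ^ n) := by rw [hx]; ring
    rw [e]
    have := mul_le_mul_of_nonneg_right (norm_sub_le (f.eval T - T ^ n) (g.eval x - x ^ n))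
      (by positivity : 0 ≤ m ^ 2)
    have a1 := hb1 T m hm h2
    have a2 := hb2 x m hm h1
    rw [hK]; nlinarith
  have hx2 : ‖x‖ ≤ 2 * ‖T‖ := by
    by_contra hcon
    push Not at hcon
    have hx1 : 1 ≤ ‖x‖ := by linarith
    have h1 := hdiff ‖x‖ hx1 le_rfl (by linarith)
    have h2 : ‖T‖ ^ n ≤ ‖x‖ ^ n / 2 := by
      calc ‖T‖ ^ n ≤ (‖x‖ / 2) ^ n := by gcongr; linarith
        _ = ‖x‖ ^ n / 2 ^ n := by rw [div_pow]
        _ ≤ ‖x‖ ^ n / 2 := by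
          apply div_le_div_of_nonneg_left (by positivity) (by norm_num)
          calc (2 : ℝ) = 2 ^ 1 := by norm_num
            _ ≤ 2 ^ n := pow_le_pow_right₀ (by norm_num) hn
    have h3 : ‖x‖ ^ n / 2 ≤ ‖x ^ n - T ^ n‖ := by
      have := norm_sub_norm_le (x ^ n) (T ^ n)
      rw [norm_pow, norm_pow] at this
      linarith
    have hxn : 0 < ‖x‖ ^ n := by positivity
    have h4 : ‖x‖ ^ n * (‖x‖ ^ 2 / 2) ≤ ‖x‖ ^ n * K := by
      calc ‖x‖ ^ n * (‖x‖ ^ 2 / 2) = ‖x‖ ^ n / 2 * ‖x‖ ^ 2 := by ring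
        _ ≤ ‖x ^ n - T ^ n‖ * ‖x‖ ^ 2 := by gcongr
        _ ≤ K * ‖x‖ ^ n := h1
        _ = ‖x‖ ^ n * K := by ring
    have h5 := le_of_mul_le_mul_left h4 hxn
    nlinarith
  have hT0 : 0 < ‖T‖ := by linarith
  have hu : ‖(x / T) ^ n - 1‖ * ‖T‖ ^ 2 ≤ K' := by
    have h1 := hdiff (2 * ‖T‖) (by linarith) hx2 (by linarith)
    have h2 : ‖x ^ n - T ^ n‖ = ‖(x / T) ^ n - 1‖ * ‖T‖ ^ n := by
      rw [← norm_pow T n, ← norm_mul, sub_mul, div_pow, div_mul_cancel₀ _ (pow_ne_zero _ hTne),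
        one_mul]
    rw [h2, mul_pow, mul_pow] at h1
    have hTn : 0 < ‖T‖ ^ n := by positivity
    have h3 : ‖T‖ ^ n * (‖(x / T) ^ n - 1‖ * ‖T‖ ^ 2) ≤ ‖T‖ ^ n * K' := by
      have : 0 ≤ ‖(x / T) ^ n - 1‖ * ‖T‖ ^ n * ‖T‖ ^ 2 := by positivity
      rw [hK']
      nlinarith
    exact le_of_mul_le_mul_left h3 hTn
  set u := (x / T) ^ n with hudef
  have hu1 : ‖u - 1‖ * ‖T‖ ≤ K' / ‖T‖ := by
    rw [le_div_iff₀ hT0]; calc _ = ‖u - 1‖ * ‖T‖ ^ 2 := by ring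
      _ ≤ _ := hu
  have hu2 : ‖u - 1‖ < δ' := by
    have h1 : K' / δ' < ‖T‖ := by linarith
    rw [div_lt_iff₀ hδ'0] at h1
    have h2 : ‖u - 1‖ * ‖T‖ ≤ K' := by
      have : ‖u - 1‖ * ‖T‖ * 1 ≤ ‖u - 1‖ * ‖T‖ * ‖T‖ := by gcongr
      nlinarith
    have h3 : ‖T‖ * ‖u - 1‖ < ‖T‖ * δ' := by linarith
    exact lt_of_mul_lt_mul_left h3 hT0.le
  have hune : u ≠ 0 := by
    intro h
    rw [h] at hu2
    have := hu2.trans_le (min_le_right _ _)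
    simp at this
  obtain ⟨w, hw, hw1⟩ := hroot u (hu2.trans_le (min_le_left _ _))
  have hwne : w ≠ 0 := by
    rintro rfl
    rw [zero_pow (by omega)] at hw
    exact hune hw.symm
  have hωn : (x / T / w) ^ n = 1 := by
    rw [div_pow, hw, ← hudef, div_self hune]
  refine ⟨x / T / w, hωn, ?_⟩
  have hωnorm : ‖x / T / w‖ = 1 := Complex.norm_eq_one_of_pow_eq_one hωn (by omega)
  have e : x - x / T / w * T = (x / T / w) * T * (w - 1) := by
    field_simp
  rw [e, norm_mul, norm_mul, hωnorm, one_mul]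
  have h1 : L * K' / ε ≤ ‖T‖ := by linarith
  rw [div_le_iff₀ hε] at h1
  calc ‖T‖ * ‖w - 1‖ ≤ ‖T‖ * (L * ‖u - 1‖) := by gcongr
    _ = L * (‖u - 1‖ * ‖T‖) := by ring
    _ ≤ L * (K' / ‖T‖) := by gcongr
    _ = L * K' / ‖T‖ := by ring
    _ ≤ ε := by rw [div_le_iff₀ hT0]; linarith

open Polynomial in
lemma finite_fiber (g : ℂ[X]) (hg : 1 ≤ g.natDegree) (y : ℂ) : {x : ℂ | g.eval x = y}.Finite := by
  have hne : g - C y ≠ 0 := by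
    intro h
    have : g = C y := sub_eq_zero.mp h
    rw [this, natDegree_C] at hg
    omega
  apply (Polynomial.finite_setOf_isRoot hne).subset
  intro x hx
  have hx' : g.eval x = y := hx
  change (g - C y).eval x = 0
  rw [eval_sub, eval_C, hx', sub_self]

open Polynomial in
lemma matching (d : ℕ) (hd : 3 ≤ d) (q : Fin d → ℕ) (hq : ∀ j, 0 < q j)
    (hco : ∀ i j : Fin d, i ≠ j → Nat.Coprime (q i) (q j))
    (f g : Fin d → ℂ[X])
    (hf : ∀ j, (f j).Monic) (hfdeg : ∀ j, (f j).natDegree = q j)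
    (hfc : ∀ j, (f j).coeff (q j - 1) = 0)
    (hg : ∀ j, (g j).Monic) (hgdeg : ∀ j, (g j).natDegree = q j)
    (hgc : ∀ j, (g j).coeff (q j - 1) = 0) (L1 L2 : ℂ)
    (H : ∀ l : Fin d → ℂ, ∑ j, l j = L1 → ∃ x : Fin d → ℂ, ∑ j, x j = L2 ∧
      ∀ j, (g j).eval (x j) = (f j).eval (l j)) (j0 : Fin d) :
    ∃ c : ℂ, f j0 = (g j0).comp (X + C c) := by
  obtain ⟨a, ha, -⟩ := exists_third hd j0 j0
  obtain ⟨b, hb, hba⟩ := exists_third hd j0 a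
  set t : Fin d → Set ℂ := fun i => {x | (g i).eval x = (f i).eval 0} ∪ {0} with ht
  have htfin : {x : Fin d → ℂ | ∀ i, x i ∈ t i}.Finite := by
    apply Set.Finite.pi'
    intro i
    exact (finite_fiber (g i) (by rw [hgdeg]; exact hq i) _).union (Set.finite_singleton 0)
  set E : Set ℂ := (fun x : Fin d → ℂ => ∑ i, x i) '' {x : Fin d → ℂ | ∀ i, x i ∈ t i} with hE
  have hEfin : E.Finite := htfin.image _
  have key : ∀ s : ℂ, ∃ e ∈ E, (f j0).eval s = (g j0).eval (s + (L2 - L1 - e)) := by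
    intro s
    have hFfin := finite_fiber (g j0) (by rw [hgdeg]; exact hq j0) ((f j0).eval s)
    set F : Set ℂ := {x | (g j0).eval x = (f j0).eval s} with hF
    set Hs : Set ℂ := (fun p : ℂ × ℂ => p.1 + p.2) '' (F ×ˢ E) with hHs
    have hHfin : Hs.Finite := (hFfin.prod hEfin).image _
    have hmem : s + (L2 - L1) ∈ closure Hs := by
      rw [Metric.mem_closure_iff]
      intro ε hε
      obtain ⟨Ra, hRa⟩ := asymp (f a) (g a) (q a) (hq a) (hf a) (hfdeg a) (hfc a) (hg a) (hgdeg a)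
        (hgc a) (ε / 4) (by linarith)
      obtain ⟨Rb, hRb⟩ := asymp (f b) (g b) (q b) (hq b) (hf b) (hfdeg b) (hfc b) (hg b) (hgdeg b)
        (hgc b) (ε / 4) (by linarith)
      obtain ⟨B, hB⟩ := hHfin.isBounded.exists_norm_le
      have hrf : ∀ n : ℕ, 0 < n → {ω : ℂ | ω ^ n = 1}.Finite := by
        intro n hn
        have := finite_fiber (X ^ n : ℂ[X]) (by rw [natDegree_X_pow]; exact hn) 1
        simpa using this
      set D : Set ℂ := (fun p : ℂ × ℂ => p.1 - p.2) ''
        ({ω : ℂ | ω ^ q a = 1} ×ˢ {ω : ℂ | ω ^ q b = 1}) \ {0} with hD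
      have hDfin : D.Finite := (((hrf _ (hq a)).prod (hrf _ (hq b))).image _).subset
        Set.sdiff_subset
      obtain ⟨δ, hδ, hδ'⟩ := Metric.mem_nhds_iff.mp
        (hDfin.isClosed.isOpen_compl.mem_nhds (x := (0 : ℂ)) (by simp [hD]))
      set M := ‖L2‖ + |B| + ‖L1 - s‖ + ε with hM
      have hM0 : 0 ≤ M := by positivity
      set T : ℝ := |Ra| + |Rb| + ‖L1 - s‖ + M / δ + 1 with hTdef
      have hMδ : 0 ≤ M / δ := by positivity
      have hT0 : 0 < T := by positivity
      have hTn : ‖(T : ℂ)‖ = T := by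
        rw [Complex.norm_real, Real.norm_of_nonneg hT0.le]
      -- the parameters
      have hj0a : j0 ≠ a := ha.symm
      set l : Fin d → ℂ := Function.update (Function.update (Function.update 0 a (T : ℂ)) b
        (L1 - s - T)) j0 s with hl
      have la : l a = T := by
        simp [hl, hba.symm, ha]
      have lb : l b = L1 - s - T := by
        simp [hl, hb]
      have lj : l j0 = s := by simp [hl]
      have lo : ∀ i, i ≠ a → i ≠ b → i ≠ j0 → l i = 0 := by
        intro i h1 h2 h3
        simp [hl, h1, h2, h3]
      set S : Finset (Fin d) := ((Finset.univ.erase a).erase b).erase j0 with hS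
      have hsum : ∀ y : Fin d → ℂ, ∑ i, y i = y a + (y b + (y j0 + ∑ i ∈ S, y i)) := by
        intro y
        rw [hS, Finset.add_sum_erase, Finset.add_sum_erase, Finset.add_sum_erase]
        · simp
        · simp [hba]
        · simp [hb.symm, ha.symm]
      have hSm : ∀ i ∈ S, i ≠ a ∧ i ≠ b ∧ i ≠ j0 := by
        intro i hi
        simp only [hS, Finset.mem_erase, Finset.mem_univ, and_true] at hi
        exact ⟨hi.2.2, hi.2.1, hi.1⟩
      have hlsum : ∑ i, l i = L1 := by
        rw [hsum, la, lb, lj, Finset.sum_eq_zero]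
        · ring
        · intro i hi
          obtain ⟨h1, h2, h3⟩ := hSm i hi
          exact lo i h1 h2 h3
      obtain ⟨x, hxs, hx⟩ := H l hlsum
      set e := ∑ i ∈ S, x i with he
      have heE : e ∈ E := by
        refine ⟨fun i => if i ∈ S then x i else 0, ?_, ?_⟩
        · intro i
          by_cases hi : i ∈ S
          · obtain ⟨h1, h2, h3⟩ := hSm i hi
            left
            simp only [hi, if_true]
            have := hx i
            rw [lo i h1 h2 h3] at this
            exact this
          · right; simp [hi]
        · simp [he]
      have hH : x j0 + e ∈ Hs := by
        refine ⟨(x j0, e), ⟨?_, heE⟩, rfl⟩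
        have := hx j0
        rw [lj] at this
        exact this
      have hxab : x a + (x b + (x j0 + e)) = L2 := by rw [← hxs, hsum x]
      obtain ⟨ωa, hωa, hωa'⟩ := hRa T (x a) (by
        rw [hTn]
        have := le_abs_self Ra; have := abs_nonneg Rb; have := norm_nonneg (L1 - s)
        linarith) (by rw [hx a, la])
      obtain ⟨ωb, hωb, hωb'⟩ := hRb (L1 - s - T) (x b) (by
        have h1 := norm_sub_norm_le (T : ℂ) (L1 - s)
        rw [norm_sub_rev (T : ℂ) (L1 - s), hTn] at h1
        have := le_abs_self Rb; have := abs_nonneg Ra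
        linarith) (by rw [hx b, lb])
      have hnb : ‖ωb‖ = 1 := Complex.norm_eq_one_of_pow_eq_one hωb (hq b).ne'
      have heq : ωa = ωb := by
        by_contra hne
        have h1 : ωa - ωb ∈ D := ⟨⟨(ωa, ωb), ⟨hωa, hωb⟩, rfl⟩, sub_ne_zero.mpr hne⟩
        have h2 : δ ≤ ‖ωa - ωb‖ := by
          by_contra hlt
          push Not at hlt
          exact hδ' (by rw [mem_ball_zero_iff]; exact hlt) h1
        have h3 : (ωa - ωb) * T = L2 + (-(x j0 + e)) + (-(ωb * (L1 - s))) +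
            (-(x a - ωa * T)) + (-(x b - ωb * (L1 - s - T))) := by
          rw [← hxab]; ring
        have h4 : ‖(ωa - ωb) * T‖ ≤ ‖L2‖ + ‖x j0 + e‖ + ‖ωb * (L1 - s)‖ +
            ‖x a - ωa * T‖ + ‖x b - ωb * (L1 - s - T)‖ := by
          rw [h3]
          refine (norm_add_le _ _).trans ?_
          rw [norm_neg]
          gcongr
          refine (norm_add_le _ _).trans ?_
          rw [norm_neg]
          gcongr
          refine (norm_add_le _ _).trans ?_
          rw [norm_neg]
          gcongr
          refine (norm_add_le _ _).trans ?_
          rw [norm_neg]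
        rw [norm_mul, hTn, norm_mul, hnb, one_mul] at h4
        have h5 := (hB _ hH).trans (le_abs_self B)
        have h6 : ‖ωa - ωb‖ * T ≤ M := by rw [hM]; linarith
        have h7 : δ * T ≤ M := (mul_le_mul_of_nonneg_right h2 hT0.le).trans h6
        have h8 : T ≤ M / δ := by rw [le_div_iff₀ hδ]; linarith
        have := abs_nonneg Ra; have := abs_nonneg Rb; have := norm_nonneg (L1 - s)
        linarith
      have hω1 : ωa = 1 := by
        apply root_coprime (hco a b hba.symm) hωa
        rw [heq]; exact hωb
      refine ⟨x j0 + e, hH, ?_⟩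
      rw [dist_eq_norm]
      have h3 : s + (L2 - L1) - (x j0 + e) = (x a - ωa * T) + (x b - ωb * (L1 - s - T)) := by
        rw [← heq, hω1, ← hxab]; ring
      rw [h3]
      refine (norm_add_le _ _).trans_lt ?_
      linarith
    rw [hHfin.isClosed.closure_eq] at hmem
    obtain ⟨⟨x0, e⟩, ⟨hx0, he⟩, hxe⟩ := hmem
    refine ⟨e, he, ?_⟩
    have : s + (L2 - L1 - e) = x0 := by
      have hxe' : x0 + e = s + (L2 - L1) := hxe
      linear_combination -hxe'
    rw [this]
    exact hx0.symm
  have hprod : ∏ e ∈ hEfin.toFinset, (f j0 - (g j0).comp (X + C (L2 - L1 - e))) = 0 := by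
    apply Polynomial.funext
    intro s
    obtain ⟨e, he, hs⟩ := key s
    rw [eval_prod, eval_zero]
    apply Finset.prod_eq_zero (hEfin.mem_toFinset.mpr he)
    rw [eval_sub, eval_comp, hs]
    simp
  obtain ⟨e, _, he⟩ := Finset.prod_eq_zero_iff.mp hprod
  exact ⟨_, sub_eq_zero.mp he⟩

end FermiAux

namespace FermiAux

/-- the traceless part of `Nm q v 1` -/
def tau (q : ℕ) (v : ℤ → ℝ) : ℂ := (Nm q v 1).trace / (q : ℂ)

open Polynomial in
/-- characteristic polynomial of the traceless part -/
def chi (q : ℕ) (v : ℤ → ℝ) : ℂ[X] :=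
  (Nm q v 1 - tau q v • (1 : Matrix (Fin q) (Fin q) ℂ)).charpoly

lemma chi_monic (q : ℕ) (v : ℤ → ℝ) : (chi q v).Monic := Matrix.charpoly_monic _

lemma chi_natDegree (q : ℕ) (v : ℤ → ℝ) : (chi q v).natDegree = q := by
  rw [chi, Matrix.charpoly_natDegree_eq_dim, Fintype.card_fin]

lemma chi_coeff {q : ℕ} (hq : 0 < q) (v : ℤ → ℝ) : (chi q v).coeff (q - 1) = 0 := by
  have : Nonempty (Fin q) := ⟨⟨0, hq⟩⟩
  have h := Matrix.trace_eq_neg_charpoly_coeff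
    (Nm q v 1 - tau q v • (1 : Matrix (Fin q) (Fin q) ℂ))
  rw [Fintype.card_fin] at h
  have h2 : (Nm q v 1 - tau q v • (1 : Matrix (Fin q) (Fin q) ℂ)).trace = 0 := by
    have hq' : (q : ℂ) ≠ 0 := by exact_mod_cast hq.ne'
    rw [Matrix.trace_sub, Matrix.trace_smul, Matrix.trace_one, Fintype.card_fin, tau, smul_eq_mul,
      div_mul_cancel₀ _ hq', sub_self]
  rw [h2] at h
  rw [chi]
  exact neg_eq_zero.mp h.symm

lemma chi_eval (q : ℕ) (v : ℤ → ℝ) (s : ℂ) :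
    (Nm q v 1 - (s + tau q v) • (1 : Matrix (Fin q) (Fin q) ℂ)).det
      = (-1) ^ q * (chi q v).eval s := by
  rw [chi, Matrix.eval_charpoly]
  have h := Matrix.det_neg (Nm q v 1 - (s + tau q v) • (1 : Matrix (Fin q) (Fin q) ℂ))
  rw [Fintype.card_fin] at h
  have e : Matrix.scalar (Fin q) s - (Nm q v 1 - tau q v • (1 : Matrix (Fin q) (Fin q) ℂ))
      = -(Nm q v 1 - (s + tau q v) • (1 : Matrix (Fin q) (Fin q) ℂ)) := by
    rw [Matrix.scalar_apply, ← Matrix.smul_one_eq_diagonal, add_smul]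
    abel
  rw [e, h, ← mul_assoc, ← mul_pow]
  simp

/-- leading coefficient -/
def ca (q : ℕ) : ℂ := ∏ m : Fin q, ex q ((m : ℕ) : ℤ)

/-- trailing coefficient -/
def cb (q : ℕ) : ℂ := ∏ m : Fin q, (ex q ((m : ℕ) : ℤ))⁻¹

lemma det_formula {q : ℕ} (hq : 0 < q) (v : ℤ → ℝ) (s z : ℂ) (hz : z ≠ 0) :
    (Nm q v z - (s + tau q v) • (1 : Matrix (Fin q) (Fin q) ℂ)).det
      = ca q * z ^ q + cb q * (z ^ q)⁻¹ - (ca q + cb q) + (-1) ^ q * (chi q v).eval s := by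
  obtain ⟨F, hF⟩ := D_structure hq v (s + tau q v)
  have h1 := hF 1 one_ne_zero
  rw [chi_eval] at h1
  rw [hF z hz, h1]
  simp only [ca, cb, one_pow, inv_one]
  ring

lemma exists_z {q : ℕ} (hq : 0 < q) (v : ℤ → ℝ) (s : ℂ) : ∃ z : ℂ, z ≠ 0 ∧
    (Nm q v z - (s + tau q v) • (1 : Matrix (Fin q) (Fin q) ℂ)).det = 0 := by
  have ha : ca q ≠ 0 := Finset.prod_ne_zero_iff.mpr (fun m _ => ex_ne _ _)
  have hb : cb q ≠ 0 := Finset.prod_ne_zero_iff.mpr (fun m _ => inv_ne_zero (ex_ne _ _))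
  set F := - (ca q + cb q) + (-1) ^ q * (chi q v).eval s with hF
  obtain ⟨r, hr⟩ := IsAlgClosed.exists_pow_nat_eq (F ^ 2 - 4 * ca q * cb q) (n := 2) (by norm_num)
  set w := (-F + r) / (2 * ca q) with hw
  have hweq : ca q * w ^ 2 + F * w + cb q = 0 := by
    rw [hw]; field_simp
    linear_combination hr
  have hw0 : w ≠ 0 := by
    intro h
    rw [h] at hweq
    apply hb
    linear_combination hweq
  obtain ⟨z, hz⟩ := IsAlgClosed.exists_pow_nat_eq w hq
  have hz0 : z ≠ 0 := by
    rintro rfl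
    rw [zero_pow hq.ne'] at hz
    exact hw0 hz.symm
  refine ⟨z, hz0, ?_⟩
  rw [det_formula hq v s z hz0, hz]
  have : ca q * w + cb q * w⁻¹ + F = 0 := by
    field_simp
    linear_combination hweq
  rw [← this, hF]; ring

open Polynomial in
lemma comp_const_zero {q : ℕ} (hq : 0 < q) (f g : ℂ[X]) (hg : g.Monic) (hgd : g.natDegree = q)
    (hfc : f.coeff (q - 1) = 0) (hgc : g.coeff (q - 1) = 0) (c : ℂ) (h : f = g.comp (X + C c)) :
    f = g := by
  have hc : c = 0 := by
    have h1 : (taylor c g).coeff (q - 1) = 0 := by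
      rw [taylor_apply, ← h, hfc]
    rw [taylor_coeff, hasseDeriv_apply, sum_over_range' _ _ (q + 1) (by omega)] at h1
    · rw [Finset.sum_range_succ] at h1
      obtain ⟨p, rfl⟩ : ∃ p, q = p + 1 := ⟨q - 1, by omega⟩
      rw [Finset.sum_range_succ] at h1
      simp only [Nat.add_sub_cancel] at h1 hgc
      have hlead : g.coeff (p + 1) = 1 := by rw [← hgd]; exact hg
      rw [hgc, hlead] at h1
      rw [Finset.sum_eq_zero] at h1
      · simp [eval_monomial] at h1
        have h2 : ((p : ℂ) + 1) * c = 0 := by linear_combination h1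
        exact (mul_eq_zero.mp h2).resolve_left (Nat.cast_add_one_ne_zero p)
      · intro i hi
        rw [Nat.choose_eq_zero_of_lt (Finset.mem_range.mp hi)]
        simp
    · intro n; simp
  rw [h, hc]
  simp

lemma tau_eq {q : ℕ} (hq : 0 < q) : ∃ k : ℂ, ∀ v : ℤ → ℝ, tau q v = k + d1 q v 0 := by
  have hq' : (q : ℂ) ≠ 0 := by exact_mod_cast hq.ne'
  refine ⟨(∑ m : Fin q, (ex q ((m : ℕ) : ℤ) * 1 + (ex q ((m : ℕ) : ℤ) * 1)⁻¹)) / q, ?_⟩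
  intro v
  simp only [tau, Matrix.trace, Matrix.diag, Nm, if_true, sub_self, Finset.sum_add_distrib,
    Finset.sum_const, Finset.card_univ, Fintype.card_fin, nsmul_eq_mul]
  field_simp

/-- average -/
def av (q : ℕ) (v : ℤ → ℝ) : ℝ := (1 / (q : ℝ)) * ∑ m : Fin q, v ((m : ℕ) : ℤ)

lemma d1_zero (q : ℕ) (v : ℤ → ℝ) : d1 q v 0 = (av q v : ℂ) := by
  simp [d1, av, ex_zero]

lemma Nm_add {q : ℕ} (hq : 0 < q) (v : ℤ → ℝ) (c : ℝ) (z : ℂ) :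
    Nm q (fun m => v m + c) z = Nm q v z + (c : ℂ) • (1 : Matrix (Fin q) (Fin q) ℂ) := by
  have hq' : (q : ℂ) ≠ 0 := by exact_mod_cast hq.ne'
  ext m m'
  simp only [Nm, Matrix.add_apply, Matrix.smul_apply, Matrix.one_apply, add_assoc]
  congr 1
  simp only [d1, Complex.ofReal_add, add_mul, Finset.sum_add_distrib, mul_add]
  congr 1
  rw [← Finset.mul_sum]
  have := ex_sum hq (-(((m : ℕ) : ℤ) - ((m' : ℕ) : ℤ)))
  simp only [neg_mul] at this
  rw [this]
  simp only [dvd_neg, dvd_iff_fin]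
  split_ifs <;> simp
  field_simp

lemma main_aux (d : ℕ) (hd : 3 ≤ d)
    (q : Fin d → ℕ) (hq : ∀ j, 0 < q j)
    (hco : ∀ i j : Fin d, i ≠ j → Nat.Coprime (q i) (q j))
    (V Y : (Fin d → ℤ) → ℝ) (lam0 : ℂ)
    (hF : ∀ z : Fin d → ℂ, (∀ j, z j ≠ 0) → floquetDet d q V z lam0 = 0 →
      floquetDet d q Y z lam0 = 0)
    (Vj Yj : Fin d → ℤ → ℝ)
    (hVsep : ∀ n : Fin d → ℤ, V n = ∑ j, Vj j (n j))
    (hYsep : ∀ n : Fin d → ℤ, Y n = ∑ j, Yj j (n j)) (j : Fin d) :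
    chi (q j) (Vj j) = chi (q j) (Yj j) := by
  obtain ⟨c, hc⟩ := matching d hd q hq hco (fun j => chi (q j) (Vj j)) (fun j => chi (q j) (Yj j))
    (fun j => chi_monic _ _) (fun j => chi_natDegree _ _) (fun j => chi_coeff (hq j) _)
    (fun j => chi_monic _ _) (fun j => chi_natDegree _ _) (fun j => chi_coeff (hq j) _)
    (lam0 - ∑ j, tau (q j) (Vj j)) (lam0 - ∑ j, tau (q j) (Yj j))
    (by
      intro l hl
      choose z hz0 hz using fun j => exists_z (hq j) (Vj j) (l j)
      have h1 : floquetDet d q V z lam0 = 0 := by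
        have h2 := Ksum_of_parts (fun j => Nm (q j) (Vj j) (z j))
          (fun j => l j + tau (q j) (Vj j)) hz
        rw [Finset.sum_add_distrib, hl, sub_add_cancel] at h2
        rw [floquetDet, floquet_Ksum d q hq V Vj hVsep z]
        exact h2
      have h3 := hF z hz0 h1
      rw [floquetDet, floquet_Ksum d q hq Y Yj hYsep z] at h3
      obtain ⟨x, hxs, hx⟩ := parts_of_Ksum _ _ h3
      refine ⟨fun j => x j - tau (q j) (Yj j), ?_, ?_⟩
      · rw [Finset.sum_sub_distrib, hxs]
      · intro j
        have e1 := hx j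
        have e2 := hz j
        rw [← sub_add_cancel (x j) (tau (q j) (Yj j)), det_formula (hq j) _ _ _ (hz0 j)] at e1
        rw [det_formula (hq j) _ _ _ (hz0 j)] at e2
        have e3 : (-1 : ℂ) ^ q j ≠ 0 := pow_ne_zero _ (by norm_num)
        apply mul_left_cancel₀ e3
        linear_combination e1 - e2) j
  exact comp_const_zero (hq j) _ _ (chi_monic _ _) (chi_natDegree _ _) (chi_coeff (hq j) _)
    (chi_coeff (hq j) _) c hc

lemma final_aux {q : ℕ} (hq : 0 < q) (v y : ℤ → ℝ) (h : chi q v = chi q y) :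
    FloquetIsospectral 1 (fun _ => q)
          (fun m => v (m 0) + (av q y - av q v)) (fun m => y (m 0)) := by
  intro z hz lam
  rw [floquetDet_one q (fun m => v m + (av q y - av q v)) z lam, floquetDet_one q y z lam,
    Nm_add hq]
  obtain ⟨k, hk⟩ := tau_eq hq
  have ht : ((av q y - av q v : ℝ) : ℂ) = tau q y - tau q v := by
    rw [hk, hk, d1_zero, d1_zero]; push_cast; ring
  have e1 : Nm q v (z 0) + ((av q y - av q v : ℝ) : ℂ) • (1 : Matrix (Fin q) (Fin q) ℂ) - lam • 1
      = Nm q v (z 0) - ((lam - tau q y) + tau q v) • (1 : Matrix (Fin q) (Fin q) ℂ) := by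
    rw [ht, add_sub_assoc, ← sub_smul, sub_eq_add_neg (Nm q v (z 0)), ← neg_smul]
    congr 2
    ring
  rw [e1, det_formula hq _ _ _ (hz 0), h, ← det_formula hq _ _ _ (hz 0), sub_add_cancel]

end FermiAux

/-- Corollary 1.6: if `V` and `Y` are Fermi isospectral and
`Y = ⊕_{j=1}^d Y_j` is completely separable, then `V = ⊕_{j=1}^d V_j` is completely separable
and, up to a constant, `V_j` and `Y_j` are Floquet isospectral as `q_jℤ`-periodic potentials
on `ℤ`. -/
theorem fermi_isospectral_completely_separable_rigidity
    (d : ℕ) (hd : 3 ≤ d)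
    (q : Fin d → ℕ) (hq : ∀ j, 0 < q j)
    (hco : ∀ i j : Fin d, i ≠ j → Nat.Coprime (q i) (q j))
    (V Y : (Fin d → ℤ) → ℝ)
    (hVper : IsPeriodicPotential d q V) (hYper : IsPeriodicPotential d q Y)
    (hFermi : FermiIsospectral d q V Y)
    (Yj : Fin d → ℤ → ℝ)
    (hYsep : ∀ n : Fin d → ℤ, Y n = ∑ j, Yj j (n j)) :
    ∃ Vj : Fin d → ℤ → ℝ,
      (∀ n : Fin d → ℤ, V n = ∑ j, Vj j (n j)) ∧
      ∀ j : Fin d, ∃ C : ℝ,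
        FloquetIsospectral 1 (fun _ => q j)
          (fun m => Vj j (m 0) + C) (fun m => Yj j (m 0)) := by
  obtain ⟨lam0, hlam⟩ := hFermi
  have hF : ∀ z : Fin d → ℂ, (∀ j, z j ≠ 0) → floquetDet d q V z lam0 = 0 →
      floquetDet d q Y z lam0 = 0 := by
    intro z hz h
    have h1 : z ∈ {z : Fin d → ℂ | (∀ j, z j ≠ 0) ∧ floquetDet d q V z lam0 = 0} := ⟨hz, h⟩
    rw [hlam] at h1
    exact h1.2
  obtain ⟨Vj, hVj⟩ := FermiAux.V_sep d hd q hq hco V Y hVper lam0 hF Yj hYsep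
  refine ⟨Vj, hVj, fun j => ⟨FermiAux.av (q j) (Yj j) - FermiAux.av (q j) (Vj j), ?_⟩⟩
  exact FermiAux.final_aux (hq j) (Vj j) (Yj j)
    (FermiAux.main_aux d hd q hq hco V Y lam0 hF Vj Yj hVj hYsep j)

end
end

section
/- Let d ≥ 3 and let q_1, …, q_d be pairwise coprime positive integers. Assume the Γ-periodic potentials V, Y : ℤ^d → ℝ are Fermi isospectral, and that Y depends only on the first d̃ variables for some d̃ < d. Then V depends only on the first d̃ variables. -/
open scoped BigOperators
open Complex

noncomputable section

section FermiHelpers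
open Filter Topology Metric


theorem kernel_asymp {ι : Type*} [Fintype ι] [DecidableEq ι] (i0 : ι) (B : ι → ι → ℂ)
    (b : ℕ → ι → ℂ) (u : ℕ → ℂ) (H : ι → ℂ) (hu : Tendsto u atTop (𝓝 0))
    (hu0 : ∀ k, u k ≠ 0) (hH : ∀ n, n ≠ i0 → H n ≠ 0)
    (hb : ∀ n, n ≠ i0 → Tendsto (fun k => u k * b k n) atTop (𝓝 (H n)))
    (hdet : ∀ k, (Matrix.of fun n n' => if n = n' then b k n else B n n').det = 0) :
    Tendsto (fun k => b k i0 / u k) atTop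
      (𝓝 (∑ n ∈ Finset.univ.erase i0, B i0 n * B n i0 / H n)) := by
  have h1 : ∀ k, ∃ φ : ι → ℂ, (∀ n, ‖φ n‖ ≤ 1) ∧ (∃ n, φ n = 1) ∧
      ∀ n, b k n * φ n + ∑ m ∈ Finset.univ.erase n, B n m * φ m = 0 := by
    intro k
    obtain ⟨v, hv, hv2⟩ := Matrix.exists_mulVec_eq_zero_iff.2 (hdet k)
    obtain ⟨j, hj⟩ := Function.ne_iff.1 hv
    have : Nonempty ι := ⟨j⟩
    obtain ⟨m, hm⟩ := Finite.exists_max (fun n => ‖v n‖)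
    have hm0 : v m ≠ 0 := by
      have h2 := hm j
      have h3 : 0 < ‖v j‖ := norm_pos_iff.2 hj
      exact norm_pos_iff.1 (lt_of_lt_of_le h3 h2)
    refine ⟨fun n => v n / v m, fun n => ?_, ⟨m, div_self hm0⟩, fun n => ?_⟩
    · rw [norm_div]
      exact div_le_one_of_le₀ (hm n) (norm_nonneg _)
    · have h4 := congrFun hv2 n
      simp only [Matrix.mulVec, dotProduct, Matrix.of_apply, Pi.zero_apply] at h4
      rw [← Finset.add_sum_erase _ _ (Finset.mem_univ n)] at h4
      simp only [if_true] at h4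
      rw [Finset.sum_congr rfl (g := fun m => B n m * v m)] at h4
      · simp only [← mul_div_assoc]
        rw [← Finset.sum_div, ← add_div, h4, zero_div]
      · intro x hx
        rw [if_neg (Finset.ne_of_mem_erase hx).symm]
  choose φ hφ1 hφ2 hφ3 using h1
  have hz : ∀ n, n ≠ i0 → Tendsto (fun k => φ k n) atTop (𝓝 0) := by
    intro n hn
    have e1 : ∀ m, Tendsto (fun k => u k * φ k m) atTop (𝓝 0) := by
      intro m
      refine squeeze_zero_norm (a := fun k => ‖u k‖) (fun k => ?_) (by simpa using hu.norm)
      rw [norm_mul]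
      exact mul_le_of_le_one_right (norm_nonneg _) (hφ1 k m)
    have e2 : Tendsto (fun k => -(∑ m ∈ Finset.univ.erase n, B n m * (u k * φ k m)) / (u k * b k n))
        atTop (𝓝 (-(∑ m ∈ Finset.univ.erase n, B n m * 0) / H n)) :=
      ((tendsto_finsetSum _ fun m _ => (e1 m).const_mul (B n m)).neg).div (hb n hn) (hH n hn)
    simp only [mul_zero, Finset.sum_const_zero, neg_zero, zero_div] at e2
    refine e2.congr' ?_
    filter_upwards [(hb n hn).eventually_ne (hH n hn)] with k hk
    rw [div_eq_iff hk]
    have := hφ3 k n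
    have e3 : ∑ m ∈ Finset.univ.erase n, B n m * (u k * φ k m)
        = u k * ∑ m ∈ Finset.univ.erase n, B n m * φ k m := by
      rw [Finset.mul_sum]; exact Finset.sum_congr rfl fun m _ => by ring
    rw [e3]
    linear_combination (-u k) * this
  have hev : ∀ᶠ k in atTop, φ k i0 = 1 := by
    have : ∀ᶠ k in atTop, ∀ n, n ≠ i0 → φ k n ≠ 1 := by
      rw [eventually_all]
      intro n
      by_cases hn : n = i0
      · simp [hn]
      · filter_upwards [(hz n hn).eventually_ne zero_ne_one] with k hk _ using hk
    filter_upwards [this] with k hk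
    obtain ⟨n, hn⟩ := hφ2 k
    by_cases h : n = i0
    · rw [← h]; exact hn
    · exact absurd hn (hk n h)
  have hlim : ∀ m, Tendsto (fun k => φ k m) atTop (𝓝 (if m = i0 then 1 else 0)) := by
    intro m
    by_cases h : m = i0
    · subst h
      simp only [if_true]
      exact (tendsto_congr' hev).2 tendsto_const_nhds
    · simpa [h] using hz m h
  have hq : ∀ n, n ≠ i0 → Tendsto (fun k => φ k n / u k) atTop (𝓝 (-(B n i0) / H n)) := by
    intro n hn
    have e2 : Tendsto (fun k => -(∑ m ∈ Finset.univ.erase n, B n m * φ k m) / (u k * b k n))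
        atTop (𝓝 (-(∑ m ∈ Finset.univ.erase n, B n m * (if m = i0 then 1 else 0)) / H n)) :=
      ((tendsto_finsetSum _ fun m _ => (hlim m).const_mul (B n m)).neg).div (hb n hn) (hH n hn)
    have e4 : ∑ m ∈ Finset.univ.erase n, B n m * (if m = i0 then 1 else 0) = B n i0 := by
      simp [Ne.symm hn]
    rw [e4] at e2
    refine e2.congr' ?_
    filter_upwards [(hb n hn).eventually_ne (hH n hn)] with k hk
    rw [div_eq_div_iff hk (hu0 k)]
    linear_combination (-u k) * hφ3 k n
  have hfin : Tendsto (fun k => -∑ m ∈ Finset.univ.erase i0, B i0 m * (φ k m / u k)) atTop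
      (𝓝 (-∑ m ∈ Finset.univ.erase i0, B i0 m * (-(B m i0) / H m))) :=
    (tendsto_finsetSum _ fun m hm => (hq m (Finset.ne_of_mem_erase hm)).const_mul _).neg
  have e5 : (-∑ m ∈ Finset.univ.erase i0, B i0 m * (-(B m i0) / H m))
      = ∑ n ∈ Finset.univ.erase i0, B i0 n * B n i0 / H n := by
    rw [← Finset.sum_neg_distrib]
    exact Finset.sum_congr rfl fun m _ => by ring
  rw [e5] at hfin
  refine hfin.congr' ?_
  filter_upwards [hev] with k hk
  have := hφ3 k i0
  rw [hk] at this
  have e6 : ∑ m ∈ Finset.univ.erase i0, B i0 m * (φ k m / u k)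
      = (∑ m ∈ Finset.univ.erase i0, B i0 m * φ k m) / u k := by
    rw [Finset.sum_div]; exact Finset.sum_congr rfl fun m _ => by ring
  rw [e6, ← neg_div]
  congr 1
  linear_combination -this

theorem exists_zero_near {ι : Type*} [Fintype ι] [DecidableEq ι] (i0 : ι) (B : ι → ι → ℂ)
    (a : ι → ℂ → ℂ → ℂ) (s0 : ℂ) (H : ι → ℂ) (hH : ∀ n, n ≠ i0 → H n ≠ 0)
    (hcont : ∀ n s, ContinuousAt (fun p : ℂ × ℂ => a n p.1 p.2) (0, s))
    (hdiff : ∀ᶠ u in 𝓝 (0 : ℂ), ∀ n, ∀ s ∈ closedBall s0 1, DifferentiableAt ℂ (a n u) s)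
    (h0 : ∀ s, a i0 0 s = s - s0) (hn : ∀ n, n ≠ i0 → ∀ s, a n 0 s = H n) :
    ∀ᶠ u in 𝓝 (0 : ℂ), ∃ s ∈ closedBall s0 1,
      (Matrix.of fun n n' => if n = n' then a n u s
        else (if n = i0 then 1 else u) * B n n').det = 0 := by
  set F : ℂ → ℂ → ℂ := fun u s => (Matrix.of fun n n' => if n = n' then a n u s
        else (if n = i0 then 1 else u) * B n n').det with hF
  have hFc : ∀ s, ContinuousAt (fun p : ℂ × ℂ => F p.1 p.2) (0, s) := by
    intro s
    simp only [hF, Matrix.det_apply', Matrix.of_apply]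
    refine tendsto_finsetSum _ fun σ _ => ?_
    refine Tendsto.const_mul _ (tendsto_finsetProd _ fun n _ => ?_)
    by_cases h : σ n = n
    · simp only [h, if_true]; exact hcont n s
    · simp only [h, if_false]
      by_cases h' : σ n = i0
      · simp only [h', if_true]; exact tendsto_const_nhds
      · simp only [h', if_false]
        exact (continuous_fst.mul continuous_const).continuousAt
  have hFd : ∀ᶠ u in 𝓝 (0 : ℂ), ∀ s ∈ closedBall s0 1, DifferentiableAt ℂ (F u) s := by
    filter_upwards [hdiff] with u hu s hs
    simp only [hF, Matrix.det_apply', Matrix.of_apply]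
    refine DifferentiableAt.fun_sum fun σ _ => ?_
    refine DifferentiableAt.const_mul (DifferentiableAt.fun_finsetProd fun n _ => ?_) _
    by_cases h : σ n = n
    · simp only [h, if_true]; exact hu n s hs
    · simp only [h, if_false]
      exact differentiableAt_const _
  have hF0 : F 0 s0 = 0 := by
    refine Matrix.exists_mulVec_eq_zero_iff.1 ⟨Pi.single i0 1, by simp, ?_⟩
    ext n
    simp only [Matrix.mulVec_single_one, Pi.zero_apply, Matrix.col_apply, Matrix.of_apply]
    by_cases h : n = i0
    · subst h; simp [h0]
    · simp [h]
  have hF1 : ∀ s, s ≠ s0 → F 0 s ≠ 0 := by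
    intro s hs hz
    obtain ⟨v, hv, hv2⟩ := Matrix.exists_mulVec_eq_zero_iff.2 hz
    have h1 : ∀ n, n ≠ i0 → v n = 0 := by
      intro n hni
      have := congrFun hv2 n
      simp only [Matrix.mulVec, dotProduct, Matrix.of_apply, Pi.zero_apply, hni, if_false,
        zero_mul, ite_mul, Finset.sum_ite_eq, Finset.mem_univ, if_true, hn n hni] at this
      exact (mul_eq_zero.1 this).resolve_left (hH n hni)
    have h2 : v i0 = 0 := by
      have := congrFun hv2 i0
      simp only [Matrix.mulVec, dotProduct, Matrix.of_apply, Pi.zero_apply] at this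
      rw [Finset.sum_eq_single i0] at this
      · simp only [if_true, h0] at this
        exact (mul_eq_zero.1 this).resolve_left (sub_ne_zero.2 hs)
      · intro m _ hm; rw [h1 m hm, mul_zero]
      · simp
    apply hv
    ext n
    by_cases h : n = i0
    · rw [h]; exact h2
    · exact h1 n h
  have hcmp : ∀ᶠ u in 𝓝 (0 : ℂ), ∀ s ∈ sphere s0 1, ‖F u s0‖ < ‖F u s‖ := by
    refine (isCompact_sphere s0 1).eventually_forall_of_forall_eventually fun s hs => ?_
    have c1 : ContinuousAt (fun p : ℂ × ℂ => ‖F p.1 s0‖) (0, s) := by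
      have : ContinuousAt (fun p : ℂ × ℂ => ((p.1, s0) : ℂ × ℂ)) (0, s) := by fun_prop
      exact (ContinuousAt.comp (f := fun p : ℂ × ℂ => ((p.1, s0) : ℂ × ℂ)) (hFc s0) this).norm
    have c2 : ContinuousAt (fun p : ℂ × ℂ => ‖F p.1 p.2‖) (0, s) := (hFc s).norm
    refine c1.eventually_lt c2 ?_
    simp only [hF0, norm_zero]
    refine norm_pos_iff.2 (hF1 s ?_)
    rintro rfl
    simp at hs
  filter_upwards [hFd, hcmp] with u hu1 hu2
  by_contra! hcon
  have hne : ∀ s ∈ closedBall s0 1, F u s ≠ 0 := hcon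
  have hdc : DiffContOnCl ℂ (fun s => (F u s)⁻¹) (ball s0 1) := by
    refine DifferentiableOn.diffContOnCl ?_
    rw [closure_ball _ one_ne_zero]
    intro s hs
    exact ((hu1 s hs).inv (hne s hs)).differentiableWithinAt
  obtain ⟨z, hz, hmax⟩ := Complex.exists_mem_frontier_isMaxOn_norm isBounded_ball
    ⟨s0, mem_ball_self one_pos⟩ hdc
  rw [frontier_ball _ one_ne_zero] at hz
  have h3 : ‖(F u s0)⁻¹‖ ≤ ‖(F u z)⁻¹‖ := hmax (subset_closure (mem_ball_self one_pos))
  rw [norm_inv, norm_inv] at h3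
  have h4 := hu2 z hz
  have p1 : 0 < ‖F u s0‖ := norm_pos_iff.2 (hne s0 (mem_closedBall_self zero_le_one))
  have := inv_strictAnti₀ p1 h4
  linarith
theorem rho_zero (d : ℕ) (q : Fin d → ℕ) (j : Fin d) : rho d q j 0 = 1 := by
  simp [rho]

theorem rho_ne_zero (d : ℕ) (q : Fin d → ℕ) (j : Fin d) (m : ℤ) : rho d q j m ≠ 0 :=
  Complex.exp_ne_zero _

theorem rho_add (d : ℕ) (q : Fin d → ℕ) (j : Fin d) (m n : ℤ) :
    rho d q j (m + n) = rho d q j m * rho d q j n := by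
  simp only [rho]
  rw [← Complex.exp_add]
  congr 1
  push_cast
  ring

theorem rho_pow (d : ℕ) (q : Fin d → ℕ) (j : Fin d) (m : ℤ) (k : ℕ) :
    rho d q j m ^ k = rho d q j (k * m) := by
  simp only [rho]
  rw [← Complex.exp_nat_mul]
  congr 1
  push_cast
  ring

theorem rho_eq_one_iff (d : ℕ) (q : Fin d → ℕ) (hq : ∀ j, 0 < q j) (j : Fin d) (m : ℤ) :
    rho d q j m = 1 ↔ (q j : ℤ) ∣ m := by
  have hqc : (q j : ℂ) ≠ 0 := by exact_mod_cast (hq j).ne'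
  have hpi : (2 * Real.pi * Complex.I : ℂ) ≠ 0 := Complex.two_pi_I_ne_zero
  simp only [rho]
  rw [Complex.exp_eq_one_iff]
  constructor
  · rintro ⟨n, hn⟩
    refine ⟨n, ?_⟩
    rw [div_eq_iff hqc] at hn
    have : (m : ℂ) = (q j : ℂ) * n := by
      apply mul_left_cancel₀ hpi
      rw [hn]; ring
    exact_mod_cast this
  · rintro ⟨n, rfl⟩
    refine ⟨n, ?_⟩
    push_cast
    field_simp

theorem rho_pow_q (d : ℕ) (q : Fin d → ℕ) (hq : ∀ j, 0 < q j) (j : Fin d) (m : ℤ) :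
    rho d q j m ^ q j = 1 := by
  rw [rho_pow, rho_eq_one_iff d q hq]
  exact dvd_mul_right _ _

theorem rho_sub (d : ℕ) (q : Fin d → ℕ) (j : Fin d) (m n : ℤ) :
    rho d q j (m - n) = rho d q j m / rho d q j n := by
  rw [eq_div_iff (rho_ne_zero d q j n), ← rho_add, sub_add_cancel]

theorem rho_norm (d : ℕ) (q : Fin d → ℕ) (hq : ∀ j, 0 < q j) (j : Fin d) (m : ℤ) :
    ‖rho d q j m‖ = 1 :=
  Complex.norm_eq_one_of_pow_eq_one (rho_pow_q d q hq j m) (hq j).ne'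

theorem rho_inj (d : ℕ) (q : Fin d → ℕ) (hq : ∀ j, 0 < q j) (j : Fin d) (m n : Fin (q j))
    (h : rho d q j (m : ℕ) = rho d q j (n : ℕ)) : m = n := by
  have h1 : rho d q j ((m : ℕ) - (n : ℕ) : ℤ) = 1 := by
    rw [rho_sub, h, div_self (rho_ne_zero _ _ _ _)]
  rw [rho_eq_one_iff d q hq] at h1
  have := Int.eq_zero_of_abs_lt_dvd h1 (by rw [abs_lt]; omega)
  omega

/-- Coprimality: equal powers in different coordinates are trivial. -/
theorem rho_coprime (d : ℕ) (q : Fin d → ℕ) (hq : ∀ j, 0 < q j)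
    (hco : ∀ i j : Fin d, i ≠ j → Nat.Coprime (q i) (q j)) (i j : Fin d) (hij : i ≠ j)
    (m n : ℤ) (h : rho d q i m = rho d q j n) : rho d q i m = 1 := by
  have h1 := rho_pow_q d q hq i m
  have h2 := rho_pow_q d q hq j n
  rw [← h] at h2
  have h3 := orderOf_dvd_of_pow_eq_one h1
  have h4 := orderOf_dvd_of_pow_eq_one h2
  exact orderOf_eq_one_iff.1 (Nat.eq_one_of_dvd_coprimes (hco i j hij) h3 h4)

theorem rho_geom (d : ℕ) (q : Fin d → ℕ) (hq : ∀ j, 0 < q j) (j : Fin d) (m : ℤ) :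
    ∑ k : Fin (q j), rho d q j ((k : ℕ) * m) = if (q j : ℤ) ∣ m then (q j : ℂ) else 0 := by
  simp only [← rho_pow]
  rw [Fin.sum_univ_eq_sum_range (fun k => rho d q j m ^ k)]
  split_ifs with h
  · rw [← rho_eq_one_iff d q hq] at h
    simp [h]
  · rw [← rho_eq_one_iff d q hq] at h
    have := mul_neg_geom_sum (rho d q j m) (q j)
    rw [rho_pow_q d q hq, sub_self] at this
    exact (mul_eq_zero.1 this).resolve_left (sub_ne_zero.2 (Ne.symm h))

theorem dft_eq (d : ℕ) (q : Fin d → ℕ) (V : (Fin d → ℤ) → ℝ) (l : Fin d → ℤ) :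
    dft d q V l = (1 / ∏ j, (q j : ℂ)) *
      ∑ n : Cell d q, (V (fun j => ((n j : ℕ) : ℤ)) : ℂ) *
        ∏ j, rho d q j (-(l j * (n j : ℕ))) := by
  simp only [dft, rho]
  congr 1
  refine Finset.sum_congr rfl fun n _ => ?_
  rw [← Complex.exp_sum, Finset.mul_sum]
  congr 2
  refine Finset.sum_congr rfl fun j _ => ?_
  push_cast
  ring

theorem dft_inv (d : ℕ) (q : Fin d → ℕ) (hq : ∀ j, 0 < q j) (V : (Fin d → ℤ) → ℝ)
    (hV : IsPeriodicPotential d q V) (n : Fin d → ℤ) :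
    (V n : ℂ) = ∑ l : Cell d q, dft d q V (fun j => ((l j : ℕ) : ℤ)) *
      ∏ j, rho d q j ((l j : ℕ) * n j) := by
  have hQ : (∏ j, (q j : ℂ)) ≠ 0 :=
    Finset.prod_ne_zero_iff.2 fun j _ => by exact_mod_cast (hq j).ne'
  have key : ∀ m : Cell d q, ∑ l : Cell d q, ∏ j, rho d q j ((l j : ℕ) * (n j - (m j : ℕ)))
      = if (∀ j, (q j : ℤ) ∣ n j - (m j : ℕ)) then ∏ j, (q j : ℂ) else 0 := by
    intro m
    have := Finset.prod_univ_sum (fun j => (Finset.univ : Finset (Fin (q j))))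
      (fun j k => rho d q j ((k : ℕ) * (n j - (m j : ℕ))))
    rw [Fintype.piFinset_univ] at this
    rw [← this]
    simp only [rho_geom d q hq]
    split_ifs with h
    · exact Finset.prod_congr rfl fun j _ => if_pos (h j)
    · push Not at h
      obtain ⟨j, hj⟩ := h
      exact Finset.prod_eq_zero (Finset.mem_univ j) (if_neg hj)
  have e1 : ∑ l : Cell d q, dft d q V (fun j => ((l j : ℕ) : ℤ)) *
      ∏ j, rho d q j ((l j : ℕ) * n j) = (1 / ∏ j, (q j : ℂ)) *
      ∑ m : Cell d q, (V (fun j => ((m j : ℕ) : ℤ)) : ℂ) *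
        ∑ l : Cell d q, ∏ j, rho d q j ((l j : ℕ) * (n j - (m j : ℕ))) := by
    simp only [dft_eq, Finset.mul_sum, Finset.sum_mul]
    rw [Finset.sum_comm]
    refine Finset.sum_congr rfl fun m _ => Finset.sum_congr rfl fun l _ => ?_
    rw [mul_assoc, mul_assoc, ← Finset.prod_mul_distrib]
    congr 2
    refine Finset.prod_congr rfl fun j _ => ?_
    rw [← rho_add]
    congr 1
    ring
  rw [e1]
  simp only [key]
  have hq' : ∀ j, (0 : ℤ) < q j := fun j => by exact_mod_cast hq j
  let m0 : Cell d q := fun j => ⟨(n j % q j).toNat, by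
    have h1 := Int.emod_lt_of_pos (n j) (hq' j)
    have h2 := Int.emod_nonneg (n j) (hq' j).ne'
    omega⟩
  have hm0 : ∀ j, ((m0 j : ℕ) : ℤ) = n j % q j := fun j => by
    have h2 := Int.emod_nonneg (n j) (hq' j).ne'
    simp [m0, h2]
  rw [Finset.sum_eq_single m0]
  · rw [if_pos]
    · have : V n = V (fun j => ((m0 j : ℕ) : ℤ)) := by
        rw [← hV (fun j => ((m0 j : ℕ) : ℤ)) (fun j => n j - (m0 j : ℕ))]
        · congr 1
          ext j
          simp
        · intro j
          rw [hm0]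
          exact Int.dvd_self_sub_emod
      rw [this]
      field_simp
    · intro j
      rw [hm0]
      exact Int.dvd_self_sub_emod
  · intro m _ hm
    rw [if_neg, mul_zero]
    intro hall
    apply hm
    ext j
    have h1 : (n j) % q j = ((m j : ℕ) : ℤ) % q j := 
      Int.emod_eq_emod_iff_emod_sub_eq_zero.2 (Int.emod_eq_zero_of_dvd (hall j))
    have h2 : ((m j : ℕ) : ℤ) % q j = (m j : ℕ) := Int.emod_eq_of_lt (by omega) (by exact_mod_cast (m j).2)
    have := hm0 j
    omega
  · simp

theorem dft_neg (d : ℕ) (q : Fin d → ℕ) (hq : ∀ j, 0 < q j) (V : (Fin d → ℤ) → ℝ)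
    (l : Fin d → ℤ) :
    dft d q V (fun j => -l j) = (starRingEnd ℂ) (dft d q V l) := by
  have hr : ∀ j m, (starRingEnd ℂ) (rho d q j m) = rho d q j (-m) := by
    intro j m
    rw [← Complex.inv_eq_conj (rho_norm d q hq j m), ← zero_sub, rho_sub, rho_zero, one_div]
  simp only [dft_eq, map_mul, map_sum, map_prod, map_div₀, map_one, Complex.conj_ofReal, hr,
    map_natCast]
  congr 1
  refine Finset.sum_congr rfl fun n _ => ?_
  congr 1
  refine Finset.prod_congr rfl fun j _ => ?_
  congr 1
  ring

theorem dft_eq_zero (d : ℕ) (q : Fin d → ℕ) (hq : ∀ j, 0 < q j) (V : (Fin d → ℤ) → ℝ)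
    (j : Fin d) (hj : ∀ n n' : Fin d → ℤ, (∀ k, k ≠ j → n k = n' k) → V n = V n')
    (l : Fin d → ℤ) (hl : ¬ (q j : ℤ) ∣ l j) : dft d q V l = 0 := by
  have : ∀ j, NeZero (q j) := fun j => ⟨(hq j).ne'⟩
  have h1 : rho d q j (-(l j)) ≠ 1 := by
    rw [Ne, rho_eq_one_iff d q hq, dvd_neg]; exact hl
  have h2 : dft d q V l = dft d q V l * rho d q j (-(l j)) := by
    rw [dft_eq, mul_assoc]
    congr 1
    rw [Finset.sum_mul]
    rw [← Equiv.sum_comp (Equiv.addRight (Pi.single j 1 : Cell d q))]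
    refine Finset.sum_congr rfl fun n _ => ?_
    have a1 : ∀ k, k ≠ j → (n + Pi.single j 1 : Cell d q) k = n k := by
      intro k hk
      simp [hk]
    simp only [Equiv.coe_addRight]
    rw [mul_assoc]
    congr 1
    · rw [hj]
      intro k hk
      rw [a1 k hk]
    · rw [← Finset.mul_prod_erase _ _ (Finset.mem_univ j),
        ← Finset.mul_prod_erase Finset.univ (fun k => rho d q k (-(l k * (n k : ℕ)))) (Finset.mem_univ j)]
      rw [mul_right_comm, ← rho_add]
      congr 1
      · have a2 : (((n + Pi.single j 1 : Cell d q) j : ℕ) : ℤ) = ((n j : ℕ) + 1 : ℤ) % q j := by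
          simp only [Pi.add_apply, Pi.single_eq_same, Fin.val_add, Fin.val_one']
          push_cast
          simp
        have a3 : ((n j : ℕ) + 1 : ℤ) % q j = (n j : ℕ) + 1 - q j * (((n j : ℕ) + 1 : ℤ) / q j) :=
          Int.emod_def _ _
        rw [a2, a3]
        have a4 : (-(l j * (((n j : ℕ) : ℤ) + 1 - q j * (((n j : ℕ) + 1 : ℤ) / q j)))) =
          (-(l j * ((n j : ℕ) : ℤ)) + -(l j)) + q j * (l j * (((n j : ℕ) + 1 : ℤ) / q j)) := by ring
        rw [a4, rho_add, (rho_eq_one_iff d q hq j (q j * _)).2 (dvd_mul_right _ _), mul_one]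
      · refine Finset.prod_congr rfl fun k hk => ?_
        rw [a1 k (Finset.ne_of_mem_erase hk)]
  have h3 : dft d q V l * (1 - rho d q j (-(l j))) = 0 := by linear_combination h2
  exact (mul_eq_zero.1 h3).resolve_right (sub_ne_zero.2 (Ne.symm h1))

/-- Collinearity of three points on the unit circle. -/
theorem circle_collinear (x1 x2 x3 y1 y2 y3 : ℂ) (hx1 : ‖x1‖ = 1) (hx2 : ‖x2‖ = 1)
    (hx3 : ‖x3‖ = 1) (hy1 : ‖y1‖ = 1) (hy2 : ‖y2‖ = 1) (hy3 : ‖y3‖ = 1)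
    (h12 : x1 ≠ x2) (h13 : x1 ≠ x3) (h23 : x2 ≠ x3)
    (h : y1 * (x2 - x3) + y2 * (x3 - x1) + y3 * (x1 - x2) = 0) :
    y1 = y2 ∨ y1 * x2 = y2 * x1 := by
  have h12' := sub_ne_zero.2 h12
  set β := (y1 - y2) / (x1 - x2) with hβ
  set α := y1 - β * x1 with hα
  have hβ' : β * (x1 - x2) = y1 - y2 := div_mul_cancel₀ _ h12'
  have e1 : y1 = α + β * x1 := by rw [hα]; ring
  have e2 : y2 = α + β * x2 := by rw [hα]; linear_combination hβ'
  have e3 : y3 = α + β * x3 := by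
    apply mul_right_cancel₀ h12'
    rw [e1, e2] at h
    linear_combination h
  have quad : ∀ x y : ℂ, ‖x‖ = 1 → ‖y‖ = 1 → y = α + β * x →
      (starRingEnd ℂ α * β) * x ^ 2 + (α * starRingEnd ℂ α + β * starRingEnd ℂ β - 1) * x
        + α * starRingEnd ℂ β = 0 := by
    intro x y hx hy hxy
    have c1 : x * starRingEnd ℂ x = 1 := by rw [Complex.mul_conj']; simp [hx]
    have c2 : y * starRingEnd ℂ y = 1 := by rw [Complex.mul_conj']; simp [hy]
    rw [hxy, map_add, map_mul] at c2
    linear_combination x * c2 - (α * starRingEnd ℂ β + β * x * starRingEnd ℂ β) * c1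
  have q1 := quad x1 y1 hx1 hy1 e1
  have q2 := quad x2 y2 hx2 hy2 e2
  have q3 := quad x3 y3 hx3 hy3 e3
  have q4 : (starRingEnd ℂ α * β) * ((x1 - x2) * (x1 - x3) * (x2 - x3)) = 0 := by
    linear_combination (x2 - x3) * q1 + (x3 - x1) * q2 + (x1 - x2) * q3
  have q5 : starRingEnd ℂ α * β = 0 :=
    (mul_eq_zero.1 q4).resolve_right
      (mul_ne_zero (mul_ne_zero h12' (sub_ne_zero.2 h13)) (sub_ne_zero.2 h23))
  rcases mul_eq_zero.1 q5 with h0 | h0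
  · right
    have : α = 0 := by simpa using h0
    rw [e1, e2, this]; ring
  · left
    rw [e1, e2, h0]; ring

/-- The leading linear form `h_n(w) = ∑ ρ^j_{n_j} w_j`. -/
def linForm (d : ℕ) (q : Fin d → ℕ) (n : Cell d q) : (Fin d → ℂ) →ₗ[ℂ] ℂ :=
  ∑ j, rho d q j (n j : ℕ) • LinearMap.proj j

theorem linForm_apply (d : ℕ) (q : Fin d → ℕ) (n : Cell d q) (w : Fin d → ℂ) :
    linForm d q n w = ∑ j, rho d q j (n j : ℕ) * w j := by
  simp [linForm]

/-- The zero of the cell. -/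
def cellZero (d : ℕ) (q : Fin d → ℕ) (hq : ∀ j, 0 < q j) : Cell d q := fun j => ⟨0, hq j⟩

theorem linForm_zero (d : ℕ) (q : Fin d → ℕ) (hq : ∀ j, 0 < q j) (w : Fin d → ℂ) :
    linForm d q (cellZero d q hq) w = ∑ j, w j := by
  simp [linForm_apply, cellZero, rho_zero]

theorem floquetDet_eq (d : ℕ) (q : Fin d → ℕ) (V : (Fin d → ℤ) → ℝ) (z : Fin d → ℂ) (lam : ℂ) :
    floquetDet d q V z lam = (Matrix.of fun n n' : Cell d q => if n = n' then
      (∑ j, (rho d q j (n j : ℕ) * z j + (rho d q j (n j : ℕ) * z j)⁻¹) + (dft d q V 0 - lam))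
      else dft d q V (fun j => ((n j : ℕ) : ℤ) - ((n' j : ℕ) : ℤ))).det := by
  unfold floquetDet
  congr 1
  ext n n'
  simp only [Matrix.sub_apply, floquetMatrix, Matrix.smul_apply, Matrix.of_apply,
    Matrix.one_apply]
  by_cases h : n = n'
  · subst h
    simp only [if_true, sub_self, smul_eq_mul, mul_one]
    have : (fun _ : Fin d => (0 : ℤ)) = 0 := rfl
    rw [this]; ring
  · simp [h]

theorem diag_scaled (d : ℕ) (q : Fin d → ℕ) (n : Cell d q) (w e : Fin d → ℂ) (u s c : ℂ)
    (hu : u ≠ 0) :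
    u * (∑ j, (rho d q j (n j : ℕ) * (w j / u + e j * s)
        + (rho d q j (n j : ℕ) * (w j / u + e j * s))⁻¹) + c)
      = ∑ j, (rho d q j (n j : ℕ) * (w j + e j * (u * s))
        + u ^ 2 * (rho d q j (n j : ℕ))⁻¹ * (w j + e j * (u * s))⁻¹) + u * c := by
  rw [mul_add, Finset.mul_sum]
  congr 1
  refine Finset.sum_congr rfl fun j _ => ?_
  have h1 : w j / u + e j * s = (w j + e j * (u * s)) / u := by field_simp
  rw [h1, mul_inv, inv_div, mul_add]
  congr 1
  · field_simp
  · rw [div_eq_mul_inv]; ring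

theorem key_identity (d : ℕ) (q : Fin d → ℕ) (hq : ∀ j, 0 < q j) (j0 : Fin d)
    (V Y : (Fin d → ℤ) → ℝ) (hF : FermiIsospectral d q V Y) (w : Fin d → ℂ)
    (hw : ∀ j, w j ≠ 0) (hw0 : ∑ j, w j = 0)
    (hH : ∀ n, n ≠ cellZero d q hq → linForm d q n w ≠ 0) :
    ∑ n ∈ Finset.univ.erase (cellZero d q hq),
      ((Complex.normSq (dft d q V (fun j => ((n j : ℕ) : ℤ))) -
        Complex.normSq (dft d q Y (fun j => ((n j : ℕ) : ℤ))) : ℝ) : ℂ) / linForm d q n w = 0 := by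
  obtain ⟨lam, hlam⟩ := hF
  set i0 := cellZero d q hq with hi0
  set e : Fin d → ℂ := Pi.single j0 1 with he
  have hes : ∀ s : ℂ, ∑ j, e j * s = s := by
    intro s
    rw [← Finset.sum_mul, he]; simp
  let B : ((Fin d → ℤ) → ℝ) → Cell d q → Cell d q → ℂ := fun X n n' =>
    dft d q X (fun j => ((n j : ℕ) : ℤ) - ((n' j : ℕ) : ℤ))
  let a : Cell d q → ℂ → ℂ → ℂ := fun n u s => if n = i0 then
      s + ∑ j, u * (w j + e j * (u * s))⁻¹ + (dft d q V 0 - lam)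
    else ∑ j, (rho d q j (n j : ℕ) * (w j + e j * (u * s))
        + u ^ 2 * (rho d q j (n j : ℕ))⁻¹ * (w j + e j * (u * s))⁻¹) + u * (dft d q V 0 - lam)
  have ha : ∀ n u s, u ≠ 0 → a n u s = (if n = i0 then 1 else u) *
      (∑ j, (rho d q j (n j : ℕ) * (w j / u + e j * s)
        + (rho d q j (n j : ℕ) * (w j / u + e j * s))⁻¹) + (dft d q V 0 - lam)) := by
    intro n u s hu
    by_cases h : n = i0
    · subst h
      simp only [a, if_true, one_mul]
      congr 1
      rw [Finset.sum_add_distrib]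
      have r1 : ∀ j, rho d q j ((i0 j : ℕ) : ℤ) = 1 := fun j => by
        simp [hi0, cellZero, rho_zero]
      simp only [r1, one_mul]
      rw [Finset.sum_add_distrib, hes, ← Finset.sum_div, hw0, zero_div, zero_add]
      congr 1
      refine Finset.sum_congr rfl fun j _ => ?_
      have h1 : w j / u + e j * s = (w j + e j * (u * s)) / u := by field_simp
      rw [h1, inv_div, div_eq_mul_inv]
    · simp only [a, h, if_false]
      rw [diag_scaled _ _ _ _ _ _ _ _ hu]
  have hnz : ∀ᶠ u in 𝓝 (0 : ℂ), ∀ s ∈ closedBall (lam - dft d q V 0) 1,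
      ∀ j, w j + e j * (u * s) ≠ 0 := by
    refine (isCompact_closedBall _ _).eventually_forall_of_forall_eventually fun s _ => ?_
    rw [eventually_all]
    intro j
    have : ContinuousAt (fun p : ℂ × ℂ => w j + e j * (p.1 * p.2)) (0, s) := by fun_prop
    exact this.eventually_ne (by simpa using hw j)
  have hzero := exists_zero_near i0 (B V) a (lam - dft d q V 0) (fun n => linForm d q n w) hH
    (by
      intro n s
      have hj : ∀ j, ContinuousAt (fun p : ℂ × ℂ => (w j + e j * (p.1 * p.2))⁻¹) (0, s) := by
        intro j
        have : ContinuousAt (fun p : ℂ × ℂ => w j + e j * (p.1 * p.2)) (0, s) := by fun_prop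
        exact this.inv₀ (by simpa using hw j)
      by_cases h : n = i0
      · simp only [a, h, if_true]
        fun_prop
      · simp only [a, h, if_false]
        fun_prop)
    (by
      filter_upwards [hnz] with u hu n s hs
      have hj : ∀ j, DifferentiableAt ℂ (fun s : ℂ => (w j + e j * (u * s))⁻¹) s := by
        intro j
        have : DifferentiableAt ℂ (fun s : ℂ => w j + e j * (u * s)) s := by fun_prop
        exact this.inv (hu s hs j)
      by_cases h : n = i0
      · simp only [a, h, if_true]
        fun_prop
      · simp only [a, h, if_false]
        fun_prop)
    (by intro s; simp only [a, if_true]; simp; ring)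
    (by intro n hn s; simp only [a, hn, if_false]; simp [linForm_apply])
  have hev : ∀ᶠ u in 𝓝[≠] (0 : ℂ), u ≠ 0 ∧ ∃ s ∈ closedBall (lam - dft d q V 0) 1,
      (∀ j, w j / u + e j * s ≠ 0) ∧ floquetDet d q V (fun j => w j / u + e j * s) lam = 0 := by
    filter_upwards [hzero.filter_mono nhdsWithin_le_nhds, hnz.filter_mono nhdsWithin_le_nhds,
      self_mem_nhdsWithin] with u h1 h2 hu
    have hu : u ≠ 0 := hu
    refine ⟨hu, ?_⟩
    obtain ⟨s, hs, hdet⟩ := h1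
    refine ⟨s, hs, fun j => ?_, ?_⟩
    · have h1 : w j / u + e j * s = (w j + e j * (u * s)) / u := by field_simp
      rw [h1]
      exact div_ne_zero (h2 s hs j) hu
    · rw [floquetDet_eq]
      set M := (Matrix.of fun n n' : Cell d q => if n = n' then
        (∑ j, (rho d q j (n j : ℕ) * (w j / u + e j * s) + (rho d q j (n j : ℕ) * (w j / u + e j * s))⁻¹) + (dft d q V 0 - lam))
        else dft d q V (fun j => ((n j : ℕ) : ℤ) - ((n' j : ℕ) : ℤ))) with hM
      have e1 : (Matrix.of fun n n' => if n = n' then a n u s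
        else (if n = i0 then 1 else u) * B V n n') =
          Matrix.of fun n n' => (fun n => if n = i0 then (1 : ℂ) else u) n * M n n' := by
        ext n n'
        simp only [Matrix.of_apply, hM]
        by_cases h : n = n'
        · simp only [h, if_true]; rw [ha _ _ _ hu]
        · simp only [h, if_false]; rfl
      rw [e1, Matrix.det_mul_column] at hdet
      refine (mul_eq_zero.1 hdet).resolve_left (Finset.prod_ne_zero_iff.2 fun n _ => ?_)
      split_ifs
      · exact one_ne_zero
      · exact hu
  obtain ⟨u, hu, hP⟩ := exists_seq_forall_of_frequently hev.frequently
  have hu' : Tendsto u atTop (𝓝 0) := hu.mono_right nhdsWithin_le_nhds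
  choose hu0 s hs hz0 hdV using hP
  have hdY : ∀ k, floquetDet d q Y (fun j => w j / u k + e j * s k) lam = 0 := by
    intro k
    have : (fun j => w j / u k + e j * s k) ∈
        {z : Fin d → ℂ | (∀ j, z j ≠ 0) ∧ floquetDet d q V z lam = 0} := ⟨hz0 k, hdV k⟩
    rw [hlam] at this
    exact this.2
  have hus : Tendsto (fun k => u k * s k) atTop (𝓝 0) := by
    have hbd : ∀ k, ‖s k‖ ≤ ‖lam - dft d q V 0‖ + 1 := by
      intro k
      have h1 := hs k
      rw [mem_closedBall, dist_eq_norm] at h1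
      have h2 := norm_add_le (lam - dft d q V 0) (s k - (lam - dft d q V 0))
      rw [add_sub_cancel] at h2
      linarith
    refine squeeze_zero_norm (a := fun k => ‖u k‖ * (‖lam - dft d q V 0‖ + 1)) (fun k => ?_) ?_
    · rw [norm_mul]
      exact mul_le_mul_of_nonneg_left (hbd k) (norm_nonneg _)
    · simpa using hu'.norm.mul_const (‖lam - dft d q V 0‖ + 1)
  have asy : ∀ X : (Fin d → ℤ) → ℝ,
      (∀ k, floquetDet d q X (fun j => w j / u k + e j * s k) lam = 0) →
      Tendsto (fun k => (∑ j, (rho d q j (i0 j : ℕ) * (w j / u k + e j * s k)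
        + (rho d q j (i0 j : ℕ) * (w j / u k + e j * s k))⁻¹) + (dft d q X 0 - lam)) / u k) atTop
      (𝓝 (∑ n ∈ Finset.univ.erase i0, B X i0 n * B X n i0 / linForm d q n w)) := by
    intro X hX
    refine kernel_asymp i0 (B X) (fun k n => ∑ j, (rho d q j (n j : ℕ) * (w j / u k + e j * s k)
        + (rho d q j (n j : ℕ) * (w j / u k + e j * s k))⁻¹) + (dft d q X 0 - lam)) u
        (fun n => linForm d q n w) hu' hu0 hH ?_ ?_
    · intro n hn
      have e2 : ∀ k, u k * (∑ j, (rho d q j (n j : ℕ) * (w j / u k + e j * s k)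
        + (rho d q j (n j : ℕ) * (w j / u k + e j * s k))⁻¹) + (dft d q X 0 - lam)) = _ :=
        fun k => diag_scaled d q n w e (u k) (s k) (dft d q X 0 - lam) (hu0 k)
      simp only [e2]
      have t1 : ∀ j, Tendsto (fun k => w j + e j * (u k * s k)) atTop (𝓝 (w j)) := by
        intro j
        simpa using (hus.const_mul (e j)).const_add (w j)
      have t2 : Tendsto (fun k => ∑ j, (rho d q j (n j : ℕ) * (w j + e j * (u k * s k))
        + u k ^ 2 * (rho d q j (n j : ℕ))⁻¹ * (w j + e j * (u k * s k))⁻¹) + u k * (dft d q X 0 - lam))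
        atTop (𝓝 (∑ j, (rho d q j (n j : ℕ) * w j + 0 ^ 2 * (rho d q j (n j : ℕ))⁻¹ * (w j)⁻¹)
          + 0 * (dft d q X 0 - lam))) :=
        (tendsto_finsetSum _ fun j _ => ((t1 j).const_mul _).add
          (((hu'.pow 2).mul_const _).mul ((t1 j).inv₀ (hw j)))).add (hu'.mul_const _)
      simpa [linForm_apply] using t2
    · intro k
      have := hX k
      rw [floquetDet_eq] at this
      exact this
  have tV := asy V hdV
  have tY := asy Y hdY
  have tD := tV.sub tY
  set L := (∑ n ∈ Finset.univ.erase i0, B V i0 n * B V n i0 / linForm d q n w) -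
    ∑ n ∈ Finset.univ.erase i0, B Y i0 n * B Y n i0 / linForm d q n w with hL
  have tD' : Tendsto (fun k => (dft d q V 0 - dft d q Y 0) / u k) atTop (𝓝 L) := by
    refine tD.congr fun k => ?_
    rw [← sub_div]; congr 1; ring
  have havg : dft d q V 0 - dft d q Y 0 = 0 := by
    have t3 := tD'.mul hu'
    rw [mul_zero] at t3
    refine tendsto_nhds_unique (tendsto_const_nhds.congr fun k => ?_) t3
    rw [div_mul_cancel₀ _ (hu0 k)]
  simp only [havg, zero_div] at tD'
  have hL0 : L = 0 := tendsto_nhds_unique tD' tendsto_const_nhds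
  rw [← hL0, hL, ← Finset.sum_sub_distrib]
  refine Finset.sum_congr rfl fun n _ => ?_
  have hB : ∀ X, B X i0 n * B X n i0 =
      (Complex.normSq (dft d q X (fun j => ((n j : ℕ) : ℤ))) : ℂ) := by
    intro X
    have b1 : B X i0 n = (starRingEnd ℂ) (dft d q X (fun j => ((n j : ℕ) : ℤ))) := by
      rw [← dft_neg d q hq]
      simp only [B]
      congr 1
      ext j
      simp [hi0, cellZero]
    have b2 : B X n i0 = dft d q X (fun j => ((n j : ℕ) : ℤ)) := by
      simp only [B]
      simp [hi0, cellZero]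
    rw [b1, b2, mul_comm, Complex.mul_conj]
  rw [hB, hB, ← sub_div]
  push_cast
  rfl

theorem residue_sum {ι : Type*} (S : Finset ι) (c A B : ι → ℂ) (hB : ∀ n ∈ S, B n ≠ 0)
    (h : ∀ᶠ ε in 𝓝[≠] (0 : ℂ), ∑ n ∈ S, c n / (A n + ε * B n) = 0) :
    ∑ n ∈ S with A n = 0, c n / B n = 0 := by
  have h1 : Tendsto (fun ε : ℂ => ∑ n ∈ S, ε * (c n / (A n + ε * B n))) (𝓝[≠] 0)
      (𝓝 (∑ n ∈ S, if A n = 0 then c n / B n else 0)) := by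
    refine tendsto_finsetSum _ fun n hn => ?_
    by_cases hA : A n = 0
    · simp only [hA, if_true, zero_add]
      refine tendsto_const_nhds.congr' ?_
      filter_upwards [self_mem_nhdsWithin] with ε hε
      have hε : ε ≠ 0 := hε
      have := hB n hn
      field_simp
    · simp only [hA, if_false]
      have : ContinuousAt (fun ε : ℂ => ε * (c n / (A n + ε * B n))) 0 := by
        refine continuousAt_id.mul (continuousAt_const.div (by fun_prop) (by simpa using hA))
      have t := this.tendsto
      simp only [zero_mul] at t
      exact t.mono_left nhdsWithin_le_nhds
  rw [Finset.sum_filter]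
  refine tendsto_nhds_unique h1 (tendsto_const_nhds.congr' ?_)
  filter_upwards [h] with ε hε
  rw [← Finset.mul_sum, hε, mul_zero]

theorem exists_class (d : ℕ) (hd : 3 ≤ d) (q : Fin d → ℕ) (hq : ∀ j, 0 < q j)
    (hco : ∀ i j : Fin d, i ≠ j → Nat.Coprime (q i) (q j)) (c : Cell d q → ℂ)
    (hc : ∀ w : Fin d → ℂ, (∀ j, w j ≠ 0) → ∑ j, w j = 0 →
      (∀ n, n ≠ cellZero d q hq → linForm d q n w ≠ 0) →
      ∑ n ∈ Finset.univ.erase (cellZero d q hq), c n / linForm d q n w = 0)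
    (l : Cell d q) (hl : l ≠ cellZero d q hq) :
    ∃ (v : Fin d → ℂ) (S : Finset (Cell d q)), ∑ j, v j = 0 ∧ (∀ j, v j ≠ 0) ∧
      (∀ n, n ≠ cellZero d q hq → linForm d q n v ≠ 0) ∧ l ∈ S ∧
      (∀ n ∈ S, n ≠ cellZero d q hq ∧ ∀ i j k, i ≠ j → i ≠ k → j ≠ k →
        rho d q i (n i : ℕ) * (rho d q j (l j : ℕ) - rho d q k (l k : ℕ)) +
        rho d q j (n j : ℕ) * (rho d q k (l k : ℕ) - rho d q i (l i : ℕ)) +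
        rho d q k (n k : ℕ) * (rho d q i (l i : ℕ) - rho d q j (l j : ℕ)) = 0) ∧
      ∑ n ∈ S, c n / linForm d q n v = 0 := by
  set i0 := cellZero d q hq with hi0
  -- generic direction
  have hv : ∃ v ∈ LinearMap.ker (linForm d q i0), ∀ i : {n // n ≠ i0} ⊕ Fin d,
      (Sum.elim (fun n : {n // n ≠ i0} => linForm d q n.1) (fun j => LinearMap.proj j) i :
        (Fin d → ℂ) →ₗ[ℂ] ℂ) v ≠ 0 := by
    refine Module.Dual.exists_forall_mem_ne_zero_of_forall_exists _ _ ?_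
    have hker : ∀ a b : Fin d, Pi.single a 1 - Pi.single b 1 ∈ LinearMap.ker (linForm d q i0) := by
      intro a b
      rw [LinearMap.mem_ker, map_sub, hi0, linForm_zero, linForm_zero]
      simp
    rintro (⟨n, hn⟩ | j)
    · obtain ⟨a, ha⟩ := Function.ne_iff.1 hn
      have hone : rho d q a (n a : ℕ) ≠ 1 := by
        intro h
        apply ha
        apply rho_inj d q hq
        rw [h, hi0]
        simp [cellZero, rho_zero]
      have : ∃ b : Fin d, b ≠ a := by
        by_cases h : a = ⟨0, by omega⟩
        · exact ⟨⟨1, by omega⟩, by rw [h]; simp⟩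
        · exact ⟨_, Ne.symm h⟩
      obtain ⟨b, hb⟩ := this
      refine ⟨_, hker a b, ?_⟩
      simp only [Sum.elim_inl, map_sub, linForm_apply]
      simp only [Pi.single_apply, mul_ite, mul_one, mul_zero, Finset.sum_ite_eq', Finset.mem_univ,
        if_true]
      intro h
      exact hone (rho_coprime d q hq hco a b hb.symm _ _ (sub_eq_zero.1 h))
    · have : ∃ b : Fin d, b ≠ j := by
        by_cases h : j = ⟨0, by omega⟩
        · exact ⟨⟨1, by omega⟩, by rw [h]; simp⟩
        · exact ⟨_, Ne.symm h⟩
      obtain ⟨b, hb⟩ := this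
      refine ⟨_, hker j b, ?_⟩
      simp [Ne.symm hb]
  obtain ⟨v, hvk, hv⟩ := hv
  have hv1 : ∀ n, n ≠ i0 → linForm d q n v ≠ 0 := fun n hn => hv (Sum.inl ⟨n, hn⟩)
  have hv2 : ∀ j, v j ≠ 0 := fun j => hv (Sum.inr j)
  have hv0 : ∑ j, v j = 0 := by rw [← linForm_zero d q hq]; exact hvk
  set p := LinearMap.ker (linForm d q i0) ⊓ LinearMap.ker (linForm d q l) with hp
  obtain ⟨w, hwp, hw⟩ := Module.Dual.exists_forall_mem_ne_zero_of_forall_exists p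
    (fun n : {n // ∃ x ∈ p, linForm d q n x ≠ 0} => linForm d q n.1) (fun n => n.2)
  have hw0 : ∑ j, w j = 0 := by rw [← linForm_zero d q hq]; exact hwp.1
  refine ⟨v, (Finset.univ.erase i0).filter (fun n => linForm d q n w = 0), hv0, hv2, hv1, ?_, ?_, ?_⟩
  · simp only [Finset.mem_filter, Finset.mem_erase, Finset.mem_univ, and_true]
    exact ⟨hl, hwp.2⟩
  · intro n hn
    simp only [Finset.mem_filter, Finset.mem_erase, Finset.mem_univ, and_true] at hn
    refine ⟨hn.1, ?_⟩
    have hall : ∀ x ∈ p, linForm d q n x = 0 := by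
      intro x hx
      by_contra hne
      exact hw ⟨n, x, hx, hne⟩ hn.2
    intro i j k hij hik hjk
    have sgl : ∀ (m : Cell d q) (a : Fin d) (y : ℂ),
        linForm d q m (Pi.single a y) = rho d q a (m a : ℕ) * y := by
      intro m a y
      simp [linForm_apply, Pi.single_apply]
    have := hall (Pi.single i (rho d q j (l j : ℕ) - rho d q k (l k : ℕ)) +
      Pi.single j (rho d q k (l k : ℕ) - rho d q i (l i : ℕ)) +
      Pi.single k (rho d q i (l i : ℕ) - rho d q j (l j : ℕ))) ?_
    · simpa only [map_add, sgl] using this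
    · rw [hp]
      refine ⟨?_, ?_⟩
      · change linForm d q i0 _ = 0
        have r1 : ∀ j, rho d q j ((i0 j : ℕ) : ℤ) = 1 := fun j => by
          simp [hi0, cellZero, rho_zero]
        simp only [map_add, sgl, r1]
        ring
      · change linForm d q l _ = 0
        simp only [map_add, sgl]
        ring
  · refine residue_sum _ c (fun n => linForm d q n w) (fun n => linForm d q n v)
      (fun n hn => hv1 n (Finset.ne_of_mem_erase hn)) ?_
    have gen : ∀ A B : ℂ, B ≠ 0 → ∀ᶠ ε in 𝓝[≠] (0 : ℂ), A + ε * B ≠ 0 := by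
      intro A B hB
      by_cases hA : A = 0
      · filter_upwards [self_mem_nhdsWithin] with ε hε
        rw [hA, zero_add]
        exact mul_ne_zero hε hB
      · have : ContinuousAt (fun ε : ℂ => A + ε * B) 0 := by fun_prop
        exact (this.eventually_ne (by simpa using hA)).filter_mono nhdsWithin_le_nhds
    have g1 : ∀ᶠ ε in 𝓝[≠] (0 : ℂ), ∀ j, w j + ε * v j ≠ 0 :=
      eventually_all.2 fun j => gen _ _ (hv2 j)
    have g2 : ∀ᶠ ε in 𝓝[≠] (0 : ℂ), ∀ n, n ≠ i0 →
        linForm d q n w + ε * linForm d q n v ≠ 0 := by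
      refine eventually_all.2 fun n => ?_
      by_cases hn : n = i0
      · simp [hn]
      · filter_upwards [gen _ _ (hv1 n hn)] with ε hε _ using hε
    filter_upwards [g1, g2] with ε h1 h2
    have e1 : ∀ n, linForm d q n w + ε * linForm d q n v = linForm d q n (w + ε • v) := by
      intro n; simp
    simp only [e1] at h2 ⊢
    refine hc (w + ε • v) (fun j => by simpa using h1 j) ?_ h2
    rw [← linForm_zero d q hq, ← hi0, ← e1, hi0, linForm_zero, linForm_zero, hw0, hv0]
    simp

theorem class_two (d : ℕ) (hd : 3 ≤ d) (q : Fin d → ℕ) (hq : ∀ j, 0 < q j)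
    (hco : ∀ i j : Fin d, i ≠ j → Nat.Coprime (q i) (q j)) (l n : Cell d q)
    (i j : Fin d) (hij : i ≠ j) (hli : (l i : ℕ) ≠ 0) (hlj : (l j : ℕ) ≠ 0)
    (hn : n ≠ cellZero d q hq)
    (rel : ∀ i j k, i ≠ j → i ≠ k → j ≠ k →
        rho d q i (n i : ℕ) * (rho d q j (l j : ℕ) - rho d q k (l k : ℕ)) +
        rho d q j (n j : ℕ) * (rho d q k (l k : ℕ) - rho d q i (l i : ℕ)) +
        rho d q k (n k : ℕ) * (rho d q i (l i : ℕ) - rho d q j (l j : ℕ)) = 0) : n = l := by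
  have one : ∀ (m : Cell d q) a, rho d q a (m a : ℕ) = 1 → (m a : ℕ) = 0 := by
    intro m a h
    have := rho_inj d q hq a (m a) ⟨0, hq a⟩ (by rw [h]; simp [rho_zero])
    rw [this]
  have dist : ∀ a b, a ≠ b → (l a : ℕ) ≠ 0 → rho d q a (l a : ℕ) ≠ rho d q b (l b : ℕ) :=
    fun a b hab hla h => hla (one l a (rho_coprime d q hq hco a b hab _ _ h))
  have hk : ∃ k, k ≠ i ∧ k ≠ j := by
    have : ∃ k ∈ (Finset.univ : Finset (Fin d)), k ∉ ({i, j} : Finset (Fin d)) := by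
      refine Finset.exists_mem_notMem_of_card_lt_card ?_
      have := Finset.card_le_two (a := i) (b := j)
      simp only [Finset.card_univ, Fintype.card_fin]
      omega
    obtain ⟨k, _, hk⟩ := this
    exact ⟨k, by simpa using hk⟩
  obtain ⟨k, hki, hkj⟩ := hk
  have hN := fun a (m : ℤ) => rho_norm d q hq a m
  have hxij := dist i j hij hli
  rcases circle_collinear _ _ _ _ _ _ (hN _ _) (hN _ _) (hN _ _) (hN _ _) (hN _ _) (hN _ _)
    hxij (dist i k hki.symm hli) (dist j k hkj.symm hlj)
    (rel i j k hij hki.symm hkj.symm) with h | h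
  · exfalso
    have yi := rho_coprime d q hq hco i j hij _ _ h
    have yj : rho d q j (n j : ℕ) = 1 := by rw [← h]; exact yi
    apply hn
    funext a
    apply Fin.ext
    change (n a : ℕ) = 0
    apply one
    by_cases hai : a = i
    · rw [hai]; exact yi
    by_cases haj : a = j
    · rw [haj]; exact yj
    have r := rel i j a hij (Ne.symm hai) (Ne.symm haj)
    rw [yi, yj] at r
    apply mul_right_cancel₀ (sub_ne_zero.2 hxij)
    linear_combination r
  · have h' : rho d q i ((n i : ℕ) - (l i : ℕ)) = rho d q j ((n j : ℕ) - (l j : ℕ)) := by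
      rw [rho_sub, rho_sub, div_eq_div_iff (rho_ne_zero _ _ _ _) (rho_ne_zero _ _ _ _), h]
    have yi := rho_coprime d q hq hco i j hij _ _ h'
    have yj : rho d q j ((n j : ℕ) - (l j : ℕ)) = 1 := by rw [← h']; exact yi
    rw [rho_sub, div_eq_one_iff_eq (rho_ne_zero _ _ _ _)] at yi yj
    funext a
    apply rho_inj d q hq
    by_cases hai : a = i
    · rw [hai]; exact yi
    by_cases haj : a = j
    · rw [haj]; exact yj
    have r := rel i j a hij (Ne.symm hai) (Ne.symm haj)
    rw [yi, yj] at r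
    apply mul_right_cancel₀ (sub_ne_zero.2 hxij)
    linear_combination r

theorem class_one (d : ℕ) (hd : 3 ≤ d) (q : Fin d → ℕ) (hq : ∀ j, 0 < q j)
    (hco : ∀ i j : Fin d, i ≠ j → Nat.Coprime (q i) (q j)) (l n : Cell d q)
    (i : Fin d) (hli : (l i : ℕ) ≠ 0) (hl : ∀ j, j ≠ i → (l j : ℕ) = 0)
    (rel : ∀ i j k, i ≠ j → i ≠ k → j ≠ k →
        rho d q i (n i : ℕ) * (rho d q j (l j : ℕ) - rho d q k (l k : ℕ)) +
        rho d q j (n j : ℕ) * (rho d q k (l k : ℕ) - rho d q i (l i : ℕ)) +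
        rho d q k (n k : ℕ) * (rho d q i (l i : ℕ) - rho d q j (l j : ℕ)) = 0) :
    ∀ j, j ≠ i → (n j : ℕ) = 0 := by
  intro j hj
  have one : ∀ (m : Cell d q) a, rho d q a (m a : ℕ) = 1 → (m a : ℕ) = 0 := by
    intro m a h
    have := rho_inj d q hq a (m a) ⟨0, hq a⟩ (by rw [h]; simp [rho_zero])
    rw [this]
  have hk : ∃ k, k ≠ i ∧ k ≠ j := by
    have : ∃ k ∈ (Finset.univ : Finset (Fin d)), k ∉ ({i, j} : Finset (Fin d)) := by
      refine Finset.exists_mem_notMem_of_card_lt_card ?_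
      have := Finset.card_le_two (a := i) (b := j)
      simp only [Finset.card_univ, Fintype.card_fin]
      omega
    obtain ⟨k, _, hk⟩ := this
    exact ⟨k, by simpa using hk⟩
  obtain ⟨k, hki, hkj⟩ := hk
  have r := rel i j k hj.symm hki.symm hkj.symm
  have xi : rho d q i (l i : ℕ) - 1 ≠ 0 := sub_ne_zero.2 fun h => hli (one l i h)
  rw [hl j hj, hl k hki] at r
  simp only [Nat.cast_zero, rho_zero] at r
  have : rho d q j (n j : ℕ) = rho d q k (n k : ℕ) := by
    apply mul_right_cancel₀ xi
    linear_combination -r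
  exact one n j (rho_coprime d q hq hco j k hkj.symm _ _ this)

theorem inv_re (y : ℂ) (hy : ‖y‖ = 1) (h1 : y ≠ 1) : ((y - 1)⁻¹).re = -(1 / 2) := by
  have h2 : Complex.normSq (y - 1) ≠ 0 := by
    rw [Ne, Complex.normSq_eq_zero]; exact sub_ne_zero.2 h1
  have h3 : Complex.normSq y = 1 := by rw [Complex.normSq_eq_norm_sq, hy]; norm_num
  rw [Complex.normSq_apply] at h3
  rw [Complex.inv_re, div_eq_iff h2, Complex.normSq_apply]
  simp only [Complex.sub_re, Complex.sub_im, Complex.one_re, Complex.one_im]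
  linarith

end FermiHelpers

/-- Theorem 1.7: if `V` and `Y` are Fermi isospectral and `Y` only depends
on the first `d̃` variables (`d̃ < d`), then `V` only depends on the first `d̃` variables. -/
theorem fermi_isospectral_depends_on_first_variables
    (d : ℕ) (hd : 3 ≤ d)
    (q : Fin d → ℕ) (hq : ∀ j, 0 < q j)
    (hco : ∀ i j : Fin d, i ≠ j → Nat.Coprime (q i) (q j))
    (V Y : (Fin d → ℤ) → ℝ)
    (hVper : IsPeriodicPotential d q V) (hYper : IsPeriodicPotential d q Y)
    (hFermi : FermiIsospectral d q V Y)
    (dt : ℕ) (hdt : dt < d)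
    (hY : ∃ Yt : (Fin dt → ℤ) → ℝ,
      ∀ n : Fin d → ℤ, Y n = Yt (fun i => n (Fin.castLE hdt.le i))) :
    ∃ Vt : (Fin dt → ℤ) → ℝ,
      ∀ n : Fin d → ℤ, V n = Vt (fun i => n (Fin.castLE hdt.le i)) := by
  obtain ⟨Yt, hYt⟩ := hY
  have hYz : ∀ l : Cell d q, ∀ j : Fin d, dt ≤ (j : ℕ) → (l j : ℕ) ≠ 0 →
      dft d q Y (fun j => ((l j : ℕ) : ℤ)) = 0 := by
    intro l j hj hlj
    refine dft_eq_zero d q hq Y j ?_ _ ?_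
    · intro n n' h
      rw [hYt, hYt]
      congr 1
      funext i
      apply h
      intro he
      have := congrArg Fin.val he
      simp at this
      omega
    · intro hdvd
      have h1 := Int.natCast_dvd_natCast.1 hdvd
      have h2 := Nat.le_of_dvd (by omega) h1
      have h3 := (l j).2
      omega
  have hVz : ∀ l : Cell d q, ∀ j : Fin d, dt ≤ (j : ℕ) → (l j : ℕ) ≠ 0 →
      dft d q V (fun j => ((l j : ℕ) : ℤ)) = 0 := by
    intro l j hj hlj
    have hl0 : l ≠ cellZero d q hq := by
      rintro rfl
      exact hlj rfl
    obtain ⟨v, S, hv0, hv1, hv2, hlS, hS, hsum⟩ := exists_class d hd q hq hco _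
      (fun w hw hw0 hH => key_identity d q hq ⟨0, by omega⟩ V Y hFermi w hw hw0 hH) l hl0
    by_cases hsup : ∃ i, i ≠ j ∧ (l i : ℕ) ≠ 0
    · obtain ⟨i, hij, hli⟩ := hsup
      have hSl : S = {l} := by
        refine Finset.eq_singleton_iff_unique_mem.2 ⟨hlS, fun n hn => ?_⟩
        exact class_two d hd q hq hco l n i j hij hli hlj (hS n hn).1 (hS n hn).2
      rw [hSl, Finset.sum_singleton, hYz l j hj hlj] at hsum
      have := (div_eq_zero_iff.1 hsum).resolve_right (hv2 l hl0)
      simpa using this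
    · push Not at hsup
      have hn1 : ∀ n ∈ S, ∀ i, i ≠ j → (n i : ℕ) = 0 := fun n hn =>
        class_one d hd q hq hco l n j hlj hsup (hS n hn).2
      have hn2 : ∀ n ∈ S, (n j : ℕ) ≠ 0 := by
        intro n hn h
        apply (hS n hn).1
        funext a
        apply Fin.ext
        change (n a : ℕ) = 0
        by_cases ha : a = j
        · rw [ha]; exact h
        · exact hn1 n hn a ha
      have hform : ∀ n ∈ S, linForm d q n v = (rho d q j (n j : ℕ) - 1) * v j := by
        intro n hn
        have e1 : linForm d q n v - ∑ a, v a = (rho d q j (n j : ℕ) - 1) * v j := by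
          rw [linForm_apply, ← Finset.sum_sub_distrib, Finset.sum_eq_single j]
          · ring
          · intro a _ ha
            rw [hn1 n hn a ha]
            simp [rho_zero]
          · simp
        rwa [hv0, sub_zero] at e1
      have hsum2 : ∑ n ∈ S, ((Complex.normSq (dft d q V (fun j => ((n j : ℕ) : ℤ))) : ℝ) : ℂ) *
          (rho d q j (n j : ℕ) - 1)⁻¹ = 0 := by
        have e2 : (∑ n ∈ S, ((Complex.normSq (dft d q V (fun j => ((n j : ℕ) : ℤ))) : ℝ) : ℂ) *
          (rho d q j (n j : ℕ) - 1)⁻¹) * (v j)⁻¹ = 0 := by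
          rw [← hsum, Finset.sum_mul]
          refine Finset.sum_congr rfl fun n hn => ?_
          rw [hform n hn, hYz n j hj (hn2 n hn), map_zero, sub_zero, div_eq_mul_inv, mul_inv,
            mul_assoc]
        exact (mul_eq_zero.1 e2).resolve_right (inv_ne_zero (hv1 j))
      have hre := congrArg Complex.re hsum2
      rw [Complex.re_sum, Complex.zero_re] at hre
      have e3 : ∑ n ∈ S, Complex.normSq (dft d q V (fun j => ((n j : ℕ) : ℤ))) = 0 := by
        have e4 : ∑ n ∈ S, Complex.normSq (dft d q V (fun j => ((n j : ℕ) : ℤ))) * (-(1 / 2))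
            = 0 := by
          rw [← hre]
          refine Finset.sum_congr rfl fun n hn => ?_
          rw [Complex.re_ofReal_mul, inv_re _ (rho_norm d q hq _ _)]
          intro h
          apply hn2 n hn
          have := rho_inj d q hq j (n j) ⟨0, hq j⟩ (by rw [h]; simp [rho_zero])
          rw [this]
        rw [← Finset.sum_mul] at e4
        linarith
      have e5 := (Finset.sum_eq_zero_iff_of_nonneg fun n _ => Complex.normSq_nonneg _).1 e3 l hlS
      exact Complex.normSq_eq_zero.1 e5
  have hdep : ∀ n n' : Fin d → ℤ, (∀ j : Fin d, (j : ℕ) < dt → n j = n' j) → V n = V n' := by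
    intro n n' h
    have : (V n : ℂ) = V n' := by
      rw [dft_inv d q hq V hVper n, dft_inv d q hq V hVper n']
      refine Finset.sum_congr rfl fun l _ => ?_
      by_cases hl : ∃ j : Fin d, dt ≤ (j : ℕ) ∧ (l j : ℕ) ≠ 0
      · obtain ⟨j, hj, hlj⟩ := hl
        rw [hVz l j hj hlj, zero_mul, zero_mul]
      · push Not at hl
        congr 1
        refine Finset.prod_congr rfl fun j _ => ?_
        by_cases hj : (j : ℕ) < dt
        · rw [h j hj]
        · rw [hl j (by omega)]
          simp
    exact_mod_cast this
  refine ⟨fun m => V (fun j => if h : (j : ℕ) < dt then m ⟨j, h⟩ else 0), fun n => ?_⟩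
  apply hdep
  intro j hj
  simp [hj]

end
end
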